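/- Let S = {f_1,…,f_m} be a C¹ weakly conformal IFS with attractor K satisfying the asymptotically weak separation condition and having no exact overlaps. Then for every probability vector (p_1,…,p_m) with all p_i > 0, the weakly conformal measure μ = ν∘π^{-1} (where ν is the Bernoulli measure on Λ^ℕ with ν([i]) = p_{i_1}⋯p_{i_k} for i ∈ Λ^k) is exact dimensional with dim(μ) = (−Σ_{i=1}^m p_i log p_i)/λ_ν, where λ_ν is the Lyapunov exponent of ν. -/

import Mathlib

/-! The local dimension of `μ = ν ∘ π⁻¹` is computed by comparing balls of radius `2⁻ᵏ` with cylinder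
sets whose diameter is about `2⁻ᵏ`.

The maps contract at small distances and the images of `K` along any code converge to a point, so
by compactness the cylinder sets `f_w(K)` shrink uniformly exponentially in the length of `w`, and
prepending a letter to a long word does not increase the diameter (`exists_diam_bound`).
Consequently the Lyapunov exponent `λ` is bounded below by a positive number and satisfies
`λ ∘ σ ≤ λ`. As the Bernoulli shift is ergodic, `λ` is almost surely constant, equal to its
integral (`ae_eq_const_of_shift_le`). The strong law of large numbers gives the exponential rate
of the `ν`-measure of the cylinders along a typical sequence (`ae_tendsto_log_cylinder`). Stopping
a sequence when its cylinder set first has diameter at most `2⁻ᵏ`, both facts combine to show that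
the stopped cylinder has `ν`-measure `2^(-(h/λ + o(1)) k)`, where `h` is the entropy
(`tendsto_along_stop`).

A ball of radius `2⁻ᵏ` about `π x` contains the image of the stopped cylinder of `x`, which bounds
the local dimension from above. For the lower bound, let `A` be the set of sequences whose stopped
cylinders have measure at most `2^(-b k)` for all `k ≥ N`. Stopped words have length at most
`γ (k + 1)`. Words of one given length define distinct maps since there are no exact overlaps, so
at most `t_k` of them have a cylinder set meeting a given ball of radius `2⁻ᵏ`. Hence the image
of `ν` restricted to `A` gives such a ball mass at most `(γ (k + 1) + 1) t_k 2^(-b k)`, and the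
factor in front is subexponential (`measure_le_count`). By the Besicovitch density theorem, at
almost every point of the image of `A` the restricted measure has positive density with respect to
`μ`, so `μ` inherits the bound with a slightly smaller exponent (`ae_lower_of_le`). Almost every
sequence lies in such a set `A` for each `b < h/λ`, which gives `ae_tendsto_dyadic`; monotonicity
passes from dyadic radii to all radii (`tendsto_of_dyadic`).

If `K` is a single point, `μ` is a point mass of dimension `0` and `λ = 0`; the formula then holds
with the convention `h / 0 = 0` (`exactDim_of_diam_eq_zero`).
-/

open Filter Metric Set MeasureTheory Topology ENNReal NNReal

noncomputable section

/-- ℝ^d with the sup norm. -/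
abbrev Euc (d : ℕ) : Type := Fin d → ℝ

/-- A `C¹` iterated function system on `ℝ^d`: `m` maps, each sending a compact set `X`
into itself, each a `C¹` diffeomorphism on an open set `U ⊇ X`, with
`sup_{x ∈ X} ‖f_i'(x)‖ < 1`. -/
structure C1IFS (d m : ℕ) where
  f : Fin m → Euc d → Euc d
  f' : Fin m → Euc d → (Euc d →L[ℝ] Euc d)
  X : Set (Euc d)
  U : Set (Euc d)
  compactX : IsCompact X
  nonemptyX : X.Nonempty
  openU : IsOpen U
  subXU : X ⊆ U
  mapsX : ∀ i, Set.MapsTo (f i) X X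
  hasDeriv : ∀ i, ∀ x ∈ U, HasFDerivAt (f i) (f' i x) x
  derivCont : ∀ i, ContinuousOn (f' i) U
  injOnU : ∀ i, Set.InjOn (f i) U
  derivBij : ∀ i, ∀ x ∈ U, Function.Bijective (f' i x)
  contract : ∀ i, ∃ c : ℝ, c < 1 ∧ ∀ x ∈ X, ‖f' i x‖ ≤ c

namespace C1IFS

variable {d m : ℕ}

/-- For a word `w = [i₁, …, i_k]`, the composition `f_{i₁} ∘ ⋯ ∘ f_{i_k}`. -/
def wmap (S : C1IFS d m) : List (Fin m) → Euc d → Euc d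
  | [] => id
  | i :: w => S.f i ∘ S.wmap w

/-- Derivative of `wmap w` at `x` (chain rule). -/
def wderiv (S : C1IFS d m) : List (Fin m) → Euc d → (Euc d →L[ℝ] Euc d)
  | [], _ => ContinuousLinearMap.id ℝ (Euc d)
  | i :: w, x => (S.f' i (S.wmap w x)).comp (S.wderiv w x)

end C1IFS

/-- `K` is the attractor of `S`: nonempty compact with `K = ⋃ i, f_i(K)`. -/
def IsAttractor {d m : ℕ} (S : C1IFS d m) (K : Set (Euc d)) : Prop :=
  IsCompact K ∧ K.Nonempty ∧ K ⊆ S.X ∧ K = ⋃ i, S.f i '' K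

/-- The word made of the first `k` letters of the sequence `x`. -/
def wpre {m : ℕ} (x : ℕ → Fin m) (k : ℕ) : List (Fin m) :=
  List.ofFn fun j : Fin k => x j

/-- The shift `σ^k`. -/
def shiftSeq {m : ℕ} (x : ℕ → Fin m) (k : ℕ) : ℕ → Fin m := fun n => x (n + k)

/-- `m(A) = inf_{‖v‖ = 1} ‖A v‖`. -/
def opMinNorm {d : ℕ} (A : Euc d →L[ℝ] Euc d) : ℝ :=
  sInf {r : ℝ | ∃ v : Euc d, ‖v‖ = 1 ∧ r = ‖A v‖}

/-- `S` is weakly conformal, with coding map `proj`: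
`proj x = lim_k f_{x₁} ∘ ⋯ ∘ f_{x_k} (z)` for every `z ∈ K`, and
`sup_x (1/k) (log ‖f'_{(x₁…x_k)}(proj (σ^k x))‖ - log m(f'_{(x₁…x_k)}(proj (σ^k x)))) → 0`. -/
def WeaklyConformalWith {d m : ℕ} (S : C1IFS d m) (K : Set (Euc d))
    (proj : (ℕ → Fin m) → Euc d) : Prop :=
  (∀ x, proj x ∈ K) ∧
  (∀ x, ∀ z ∈ K, Tendsto (fun k => S.wmap (wpre x k) z) atTop (𝓝 (proj x))) ∧
  Tendsto
    (fun k : ℕ =>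
      ⨆ x : ℕ → Fin m,
        (Real.log ‖S.wderiv (wpre x k) (proj (shiftSeq x k))‖ -
            Real.log (opMinNorm (S.wderiv (wpre x k) (proj (shiftSeq x k))))) / k)
    atTop (𝓝 0)

/-- `S` is weakly conformal. -/
def IsWeaklyConformal {d m : ℕ} (S : C1IFS d m) (K : Set (Euc d)) : Prop :=
  ∃ proj, WeaklyConformalWith S K proj

/-- `limsup` of sets indexed by finite words: points belonging to `E w` for words `w`
of arbitrarily large length. -/
def limsupWords {m : ℕ} {α : Type*} (E : List (Fin m) → Set α) : Set α :=
  ⋂ k : ℕ, ⋃ (w : List (Fin m)) (_ : k ≤ w.length), E w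

/-- `limsup` of a sequence of sets. -/
def limsupSets {α : Type*} (A : ℕ → Set α) : Set α :=
  ⋂ k : ℕ, ⋃ (n : ℕ) (_ : k ≤ n), A n

/-- The pressure of `S` at `s` is `P`:
`(1/k) log Σ_{w ∈ Λ^k} |f_w(K)|^s → P`. -/
def HasPressure {d m : ℕ} (S : C1IFS d m) (K : Set (Euc d)) (s P : ℝ) : Prop :=
  Tendsto
    (fun k : ℕ =>
      Real.log (∑ w : Fin k → Fin m, diam (S.wmap (List.ofFn w) '' K) ^ s) / k)
    atTop (𝓝 P)

/-- `s`-dimensional Hausdorff content (coverings by closed balls, no scale restriction). -/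
def hContent {d : ℕ} (s : ℝ) (E : Set (Euc d)) : ℝ≥0∞ :=
  ⨅ (t : ℕ → Set (Euc d)) (_ : E ⊆ ⋃ n, t n)
    (_ : ∀ n, ∃ x r, t n = closedBall x r),
    ∑' n, ENNReal.ofReal (diam (t n)) ^ s

/-- The `μ`-essential `s`-dimensional Hausdorff content of `A`. -/
def essContent {d : ℕ} (μ : Measure (Euc d)) (s : ℝ) (A : Set (Euc d)) : ℝ≥0∞ :=
  ⨅ (E : Set (Euc d)) (_ : E ⊆ A) (_ : MeasurableSet E) (_ : μ E = μ A),
    hContent s E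

/-- `μ` is the weakly conformal measure for `S` and the positive probability vector `p`. -/
def IsWeaklyConformalMeasure {d m : ℕ} (S : C1IFS d m) (p : Fin m → ℝ)
    (μ : Measure (Euc d)) : Prop :=
  (∀ i, 0 < p i) ∧ (∑ i, p i = 1) ∧ IsProbabilityMeasure μ ∧
    μ = ∑ i, ENNReal.ofReal (p i) • μ.map (S.f i)

/-- `μ` is exact dimensional with dimension `α`. -/
def ExactDim {d : ℕ} (μ : Measure (Euc d)) (α : ℝ) : Prop :=
  ∀ᵐ x ∂μ, Tendsto (fun r : ℝ => Real.log (μ (closedBall x r)).toReal / Real.log r)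
    (𝓝[>] 0) (𝓝 α)

/-- The sequence of balls `B` is `μ`-asymptotically covering. -/
def MuAC {d : ℕ} (μ : Measure (Euc d)) (B : ℕ → Set (Euc d)) : Prop :=
  ∃ C : ℝ≥0∞, 0 < C ∧ ∀ Ω : Set (Euc d), IsOpen Ω → ∀ g : ℕ,
    ∃ F : Finset ℕ, (∀ n ∈ F, g ≤ n) ∧ (∀ n ∈ F, B n ⊆ Ω) ∧
      ((F : Set ℕ).Pairwise fun a b => Disjoint (B a) (B b)) ∧
      C * μ Ω ≤ μ (⋃ n ∈ F, B n)

/-- A gauge function: vanishing at `0`, nonnegative, increasing near `0`. -/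
def IsGauge (ζ : ℝ → ℝ) : Prop :=
  (∀ t, 0 ≤ ζ t) ∧ ζ 0 = 0 ∧ ∃ η > 0, StrictMonoOn ζ (Icc 0 η)

/-- Hausdorff pre-measure at scale `t` associated with a gauge `ζ`. -/
def gaugeContentAt {d : ℕ} (ζ : ℝ → ℝ) (t : ℝ) (E : Set (Euc d)) : ℝ≥0∞ :=
  ⨅ (c : ℕ → Set (Euc d)) (_ : E ⊆ ⋃ n, c n)
    (_ : ∀ n, (∃ x r, c n = closedBall x r) ∧ diam (c n) ≤ t),
    ∑' n, ENNReal.ofReal (ζ (diam (c n)))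

/-- The Hausdorff measure associated with the gauge `ζ`. -/
def gaugeMeasure {d : ℕ} (ζ : ℝ → ℝ) (E : Set (Euc d)) : ℝ≥0∞ :=
  ⨆ (t : ℝ) (_ : 0 < t), gaugeContentAt ζ t E

/-- The cylinder of sequences beginning with the word `w`. -/
def cylinder {m : ℕ} (w : List (Fin m)) : Set (ℕ → Fin m) :=
  {x | wpre x w.length = w}

/-- The generation-`k` cut `Λ^{(k)}`. -/
def lamCut {d m : ℕ} (S : C1IFS d m) (K : Set (Euc d)) (k : ℕ) : Set (List (Fin m)) :=
  {w | w ≠ [] ∧ diam (S.wmap w '' K) ≤ ((2 : ℝ) ^ k)⁻¹ ∧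
    ((2 : ℝ) ^ k)⁻¹ < diam (S.wmap w.dropLast '' K)}

/-- The asymptotically weak separation condition:
`t_k = max_x #{f_w : w ∈ Λ^{(k)}, f_w(K) ∩ B(x, 2^{-k}) ≠ ∅}` satisfies `(log t_k)/k → 0`. -/
def AWSC {d m : ℕ} (S : C1IFS d m) (K : Set (Euc d)) : Prop :=
  ∃ t : ℕ → ℕ,
    (∀ k : ℕ, ∀ x : Euc d,
      Set.ncard {g : Euc d → Euc d | ∃ w ∈ lamCut S K k, S.wmap w = g ∧
        (S.wmap w '' K ∩ closedBall x (((2 : ℝ) ^ k)⁻¹)).Nonempty} ≤ t k) ∧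
    Tendsto (fun k : ℕ => Real.log (t k) / k) atTop (𝓝 0)

/-- `S` has no exact overlaps. -/
def NoExactOverlaps {d m : ℕ} (S : C1IFS d m) : Prop :=
  ∀ w w' : List (Fin m), w.length = w'.length → w ≠ w' → S.wmap w ≠ S.wmap w'

/-- A self-similar IFS on `ℝ^d` with contraction ratios `c i ∈ (0,1)`. -/
structure SelfSimIFS (d m : ℕ) where
  f : Fin m → Euc d → Euc d
  c : Fin m → ℝ
  c_pos : ∀ i, 0 < c i
  c_lt_one : ∀ i, c i < 1
  sim : ∀ i x y, dist (f i x) (f i y) = c i * dist x y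

namespace SelfSimIFS

variable {d m : ℕ}

/-- For a word `w = [i₁, …, i_k]`, the composition `f_{i₁} ∘ ⋯ ∘ f_{i_k}`. -/
def wmap (S : SelfSimIFS d m) : List (Fin m) → Euc d → Euc d
  | [] => id
  | i :: w => S.f i ∘ S.wmap w

/-- `K` is the attractor of the self-similar IFS `S`. -/
def IsAttractor (S : SelfSimIFS d m) (K : Set (Euc d)) : Prop :=
  IsCompact K ∧ K.Nonempty ∧ K = ⋃ i, S.f i '' K

end SelfSimIFS

/-! ### Words and prefixes -/

lemma wpre_length {m : ℕ} (x : ℕ → Fin m) (n : ℕ) : (wpre x n).length = n := by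
  simp [wpre]

lemma wpre_add {m : ℕ} (x : ℕ → Fin m) (n k : ℕ) :
    wpre x (n + k) = wpre x n ++ wpre (shiftSeq x n) k := by
  unfold wpre
  rw [List.ofFn_add]
  congr 1
  congr 1
  funext j
  simp [shiftSeq, add_comm]

lemma wpre_eq_iff {m : ℕ} (x y : ℕ → Fin m) (n : ℕ) :
    wpre x n = wpre y n ↔ ∀ j < n, x j = y j := by
  unfold wpre
  rw [List.ofFn_inj, funext_iff]
  exact ⟨fun h j hj => h ⟨j, hj⟩, fun h j => h j j.2⟩

lemma wpre_one_add {m : ℕ} (x : ℕ → Fin m) (n : ℕ) :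
    wpre x (n + 1) = x 0 :: wpre (shiftSeq x 1) n := by
  rw [add_comm, wpre_add]
  simp [wpre]

lemma wpre_succ_dropLast {m : ℕ} (x : ℕ → Fin m) (n : ℕ) :
    (wpre x (n + 1)).dropLast = wpre x n := by
  rw [wpre_add]
  simp [wpre]

lemma wpre_measurable {m : ℕ} {β : Type*} [MeasurableSpace β] (G : List (Fin m) → β) (n : ℕ) :
    Measurable fun x : ℕ → Fin m => G (wpre x n) := by
  have h1 : Measurable fun x : ℕ → Fin m => fun j : Fin n => x j :=
    measurable_pi_lambda _ fun j => measurable_pi_apply _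
  have h2 : Measurable fun u : Fin n → Fin m => G (List.ofFn u) := Measurable.of_discrete
  exact h2.comp h1

lemma exists_wpre_eq {m : ℕ} (hm : 2 ≤ m) (w : List (Fin m)) :
    ∃ x : ℕ → Fin m, wpre x w.length = w := by
  refine ⟨fun n => w.getD n ⟨0, by omega⟩, ?_⟩
  unfold wpre
  refine List.ext_getElem (by simp) ?_
  intro i h1 h2
  simp at h1
  simp

/-! ### Geometry of the cylinder sets -/

section IFS

variable {d m : ℕ} {S : C1IFS d m} {K : Set (Euc d)}

lemma wmap_append (S : C1IFS d m) (v w : List (Fin m)) (y : Euc d) :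
    S.wmap (v ++ w) y = S.wmap v (S.wmap w y) := by
  induction v with
  | nil => rfl
  | cons i v ih => simp [C1IFS.wmap, ih]

lemma wmap_mem (hK : IsAttractor S K) (w : List (Fin m)) {y : Euc d} (hy : y ∈ K) :
    S.wmap w y ∈ K := by
  induction w with
  | nil => exact hy
  | cons i w ih =>
    rw [hK.2.2.2]
    exact mem_iUnion.2 ⟨i, _, ih, rfl⟩

lemma wmap_continuousOn (hK : IsAttractor S K) (w : List (Fin m)) :
    ContinuousOn (S.wmap w) K := by
  induction w with
  | nil => exact continuousOn_id
  | cons i w ih =>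
    have : ContinuousOn (S.f i) K := fun y hy =>
      (S.hasDeriv i y (S.subXU (hK.2.2.1 hy))).continuousAt.continuousWithinAt
    exact this.comp ih fun y hy => wmap_mem hK w hy

lemma wmap_injOn (hK : IsAttractor S K) (w : List (Fin m)) : InjOn (S.wmap w) K := by
  induction w with
  | nil => exact injOn_id _
  | cons i w ih =>
    have : InjOn (S.f i) K := (S.injOnU i).mono (hK.2.2.1.trans S.subXU)
    exact this.comp ih fun y hy => wmap_mem hK w hy

lemma wmap_image_isCompact (hK : IsAttractor S K) (w : List (Fin m)) :
    IsCompact (S.wmap w '' K) := hK.1.image_of_continuousOn (wmap_continuousOn hK w)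

lemma wmap_image_isBounded (hK : IsAttractor S K) (w : List (Fin m)) :
    Bornology.IsBounded (S.wmap w '' K) := (wmap_image_isCompact hK w).isBounded

lemma wmap_append_image_subset (hK : IsAttractor S K) (v w : List (Fin m)) :
    S.wmap (v ++ w) '' K ⊆ S.wmap v '' K := by
  rintro _ ⟨y, hy, rfl⟩
  exact ⟨S.wmap w y, wmap_mem hK w hy, (wmap_append S v w y).symm⟩

/-- The `f_i` need not contract globally on `K` (the set `X` is not assumed convex), but
they do at small distances, since a neighbourhood of `K` consists of points where all the
derivatives have norm at most some `ρ < 1`. -/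
lemma exists_local_contraction (hK : IsAttractor S K) :
    ∃ δ > 0, ∃ ρ : ℝ, 0 < ρ ∧ ρ < 1 ∧ ∀ i, ∀ y ∈ K, ∀ z ∈ K, dist y z < δ →
      dist (S.f i y) (S.f i z) ≤ ρ * dist y z := by
  choose c hc1 hc using S.contract
  obtain ⟨ρ, hρ0, hρ1, hρ⟩ : ∃ ρ : ℝ, 0 < ρ ∧ ρ < 1 ∧ ∀ i, c i < ρ := by
    have : ∀ᶠ ρ in 𝓝[<] (1 : ℝ), 0 < ρ ∧ ρ < 1 ∧ ∀ i, c i < ρ := by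
      have h0 : ∀ᶠ ρ in 𝓝[<] (1 : ℝ), 0 < ρ :=
        eventually_nhdsWithin_of_eventually_nhds (eventually_gt_nhds one_pos)
      have h1 : ∀ᶠ ρ in 𝓝[<] (1 : ℝ), ρ < 1 := self_mem_nhdsWithin
      have h2 : ∀ᶠ ρ in 𝓝[<] (1 : ℝ), ∀ i, c i < ρ := eventually_all.2 fun i =>
        eventually_nhdsWithin_of_eventually_nhds (eventually_gt_nhds (hc1 i))
      filter_upwards [h0, h1, h2] with ρ a b e using ⟨a, b, e⟩
    exact this.exists
  set V : Set (Euc d) := ⋂ i, S.U ∩ (fun x => ‖S.f' i x‖) ⁻¹' Iio ρ with hV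
  have hVo : IsOpen V := isOpen_iInter_of_finite fun i =>
    (S.derivCont i).norm.isOpen_inter_preimage S.openU isOpen_Iio
  have hKV : K ⊆ V := fun y hy => mem_iInter.2 fun i =>
    ⟨S.subXU (hK.2.2.1 hy), (hc i y (hK.2.2.1 hy)).trans_lt (hρ i)⟩
  obtain ⟨δ, hδ, hδV⟩ := hK.1.exists_thickening_subset_open hVo hKV
  refine ⟨δ, hδ, ρ, hρ0, hρ1, fun i y hy z hz hyz => ?_⟩
  have hball : ∀ u ∈ ball z δ, u ∈ S.U ∧ ‖S.f' i u‖ < ρ := fun u hu => by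
    have : u ∈ V := hδV (mem_thickening_iff.2 ⟨z, hz, hu⟩)
    exact mem_iInter.1 this i
  rw [dist_eq_norm, dist_eq_norm]
  exact Convex.norm_image_sub_le_of_norm_hasFDerivWithin_le
    (fun u hu => (S.hasDeriv i u (hball u hu).1).hasFDerivWithinAt)
    (fun u hu => (hball u hu).2.le) (convex_ball z δ) (mem_ball_self hδ) hyz

lemma wmap_dist_le (hK : IsAttractor S K) {δ ρ : ℝ} (hρ0 : 0 < ρ) (hρ1 : ρ < 1)
    (h : ∀ i, ∀ y ∈ K, ∀ z ∈ K, dist y z < δ → dist (S.f i y) (S.f i z) ≤ ρ * dist y z)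
    (w : List (Fin m)) {y z : Euc d} (hy : y ∈ K) (hz : z ∈ K) (hyz : dist y z < δ) :
    dist (S.wmap w y) (S.wmap w z) ≤ ρ ^ w.length * dist y z := by
  induction w with
  | nil => simp [C1IFS.wmap]
  | cons i w ih =>
    have h1 : ρ ^ w.length * dist y z ≤ dist y z :=
      mul_le_of_le_one_left dist_nonneg (pow_le_one₀ hρ0.le hρ1.le)
    calc dist (S.wmap (i :: w) y) (S.wmap (i :: w) z)
        ≤ ρ * dist (S.wmap w y) (S.wmap w z) :=
          h i _ (wmap_mem hK w hy) _ (wmap_mem hK w hz) (by linarith)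
      _ ≤ ρ * (ρ ^ w.length * dist y z) := by gcongr
      _ = ρ ^ (i :: w).length * dist y z := by rw [List.length_cons]; ring

/-- Pointwise convergence to the coding map, together with compactness of `K` and of the
sequence space, makes all cylinder sets of some fixed generation small. -/
lemma exists_uniform_small (hm : 2 ≤ m) (hK : IsAttractor S K) (proj : (ℕ → Fin m) → Euc d)
    (hlim : ∀ x, ∀ z ∈ K, Tendsto (fun k => S.wmap (wpre x k) z) atTop (𝓝 (proj x)))
    {δ ρ : ℝ} (hδ : 0 < δ) (hρ0 : 0 < ρ) (hρ1 : ρ < 1)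
    (h : ∀ i, ∀ y ∈ K, ∀ z ∈ K, dist y z < δ → dist (S.f i y) (S.f i z) ≤ ρ * dist y z) :
    ∃ n, ∀ w : List (Fin m), w.length = n → ∀ y ∈ K, ∀ z ∈ K,
      dist (S.wmap w y) (S.wmap w z) < δ := by
  obtain ⟨T, hTK, hTf, hT⟩ := hK.1.finite_cover_balls hδ
  set O : ℕ → Set (ℕ → Fin m) := fun n =>
    {x | ∀ y ∈ K, ∀ z ∈ K, dist (S.wmap (wpre x n) y) (S.wmap (wpre x n) z) < δ} with hO
  have hopen : ∀ n, IsOpen (O n) := by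
    intro n
    have hc : Continuous fun x : ℕ → Fin m => fun j : Fin n => x j :=
      continuous_pi fun j => continuous_apply _
    exact (isOpen_discrete {u : Fin n → Fin m | ∀ y ∈ K, ∀ z ∈ K,
      dist (S.wmap (List.ofFn u) y) (S.wmap (List.ofFn u) z) < δ}).preimage hc
  -- generation-`b` cylinder sets lie in images of points of `K` under the generation-`a` prefix
  have hmono : Monotone O := by
    intro a b hab x hx y hy z hz
    obtain ⟨e, rfl⟩ := Nat.exists_eq_add_of_le hab
    rw [wpre_add, wmap_append, wmap_append]
    exact hx _ (wmap_mem hK _ hy) _ (wmap_mem hK _ hz)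
  have hcov : (univ : Set (ℕ → Fin m)) ⊆ ⋃ n, O n := by
    intro x _
    have h1 : ∀ᶠ n in atTop, ∀ u ∈ T, dist (S.wmap (wpre x n) u) (proj x) < δ / 4 :=
      (eventually_all_finite hTf).2 fun u hu =>
        (tendsto_iff_dist_tendsto_zero.1 (hlim x u (hTK hu))).eventually
          (gt_mem_nhds (by linarith))
    have h2 : ∀ᶠ n in atTop, ρ ^ n * δ < δ / 4 := by
      have := (tendsto_pow_atTop_nhds_zero_of_lt_one hρ0.le hρ1).mul_const δ
      rw [zero_mul] at this
      exact this.eventually (gt_mem_nhds (by linarith))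
    -- a `δ`-net `T` controls all of `K`, by contraction at distances below `δ`
    obtain ⟨n, hn1, hn2⟩ := (h1.and h2).exists
    have key : ∀ y ∈ K, dist (S.wmap (wpre x n) y) (proj x) < δ / 2 := by
      intro y hy
      obtain ⟨u, hu, hyu⟩ := mem_iUnion₂.1 (hT hy)
      have h3 := wmap_dist_le hK hρ0 hρ1 h (wpre x n) hy (hTK hu) hyu
      rw [wpre_length] at h3
      have h4 : ρ ^ n * dist y u ≤ ρ ^ n * δ := by
        have : dist y u < δ := hyu
        gcongr
      have h5 := dist_triangle (S.wmap (wpre x n) y) (S.wmap (wpre x n) u) (proj x)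
      have h6 := hn1 u hu
      linarith
    refine mem_iUnion.2 ⟨n, fun y hy z hz => ?_⟩
    have := dist_triangle_right (S.wmap (wpre x n) y) (S.wmap (wpre x n) z) (proj x)
    have := key y hy
    have := key z hz
    linarith
  obtain ⟨n, hn⟩ := isCompact_univ.elim_directed_cover O hopen hcov hmono.directed_le
  refine ⟨n, fun w hw y hy z hz => ?_⟩
  obtain ⟨x, hx⟩ := exists_wpre_eq hm w
  have := hn (mem_univ x) y hy z hz
  rwa [← hw, hx] at this

/-- Cylinder sets shrink uniformly exponentially fast, and applying one more map to a
cylinder set of high generation does not increase its diameter. -/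
lemma exists_diam_bound (hm : 2 ≤ m) (hK : IsAttractor S K) (proj : (ℕ → Fin m) → Euc d)
    (hlim : ∀ x, ∀ z ∈ K, Tendsto (fun k => S.wmap (wpre x k) z) atTop (𝓝 (proj x))) :
    ∃ C : ℝ, 0 < C ∧ ∃ ρ : ℝ, 0 < ρ ∧ ρ < 1 ∧ ∃ n₀ : ℕ,
      (∀ w : List (Fin m), diam (S.wmap w '' K) ≤ C * ρ ^ w.length) ∧
      (∀ i, ∀ w : List (Fin m), n₀ ≤ w.length →
        diam (S.wmap (i :: w) '' K) ≤ diam (S.wmap w '' K)) := by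
  obtain ⟨δ, hδ, ρ, hρ0, hρ1, h⟩ := exists_local_contraction hK
  obtain ⟨n₀, hn₀⟩ := exists_uniform_small hm hK proj hlim hδ hρ0 hρ1 h
  have hsmall : ∀ w : List (Fin m), n₀ ≤ w.length → ∀ y ∈ K, ∀ z ∈ K,
      dist (S.wmap w y) (S.wmap w z) < δ := by
    intro w hw y hy z hz
    rw [← List.take_append_drop n₀ w, wmap_append, wmap_append]
    exact hn₀ _ (by simp [hw]) _ (wmap_mem hK _ hy) _ (wmap_mem hK _ hz)
  -- the constant also absorbs the cylinder sets of generation below `n₀`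
  refine ⟨(δ + diam K) / ρ ^ n₀, by have := diam_nonneg (s := K); positivity, ρ, hρ0, hρ1, n₀,
    ?_, ?_⟩
  · intro w
    have hC : 0 ≤ (δ + diam K) / ρ ^ n₀ := by
      have := diam_nonneg (s := K); positivity
    refine diam_le_of_forall_dist_le (by positivity) ?_
    rintro _ ⟨y, hy, rfl⟩ _ ⟨z, hz, rfl⟩
    have hdK : 0 ≤ diam K := diam_nonneg
    rcases lt_or_ge w.length n₀ with hw | hw
    · have h1 : dist (S.wmap w y) (S.wmap w z) ≤ diam K :=
        dist_le_diam_of_mem hK.1.isBounded (wmap_mem hK w hy) (wmap_mem hK w hz)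
      have h2 : ρ ^ n₀ ≤ ρ ^ w.length := pow_le_pow_of_le_one hρ0.le hρ1.le hw.le
      calc dist (S.wmap w y) (S.wmap w z) ≤ δ + diam K := by linarith
        _ = (δ + diam K) / ρ ^ n₀ * ρ ^ n₀ := by field_simp
        _ ≤ _ := by gcongr
    · obtain ⟨v, u, hvu, hu⟩ : ∃ v u : List (Fin m), w = v ++ u ∧ u.length = n₀ :=
        ⟨w.take (w.length - n₀), w.drop (w.length - n₀), (List.take_append_drop _ _).symm,
          by simp; omega⟩
      have h1 := wmap_dist_le hK hρ0 hρ1 h v (wmap_mem hK u hy) (wmap_mem hK u hz)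
        (hn₀ u hu y hy z hz)
      rw [← wmap_append, ← wmap_append, ← hvu] at h1
      have h2 := hn₀ u hu y hy z hz
      have h3 : ρ ^ w.length = ρ ^ v.length * ρ ^ n₀ := by
        rw [hvu, List.length_append, hu, pow_add]
      calc dist (S.wmap w y) (S.wmap w z) ≤ ρ ^ v.length * dist (S.wmap u y) (S.wmap u z) := h1
        _ ≤ ρ ^ v.length * (δ + diam K) := by gcongr; linarith
        _ = _ := by rw [h3]; field_simp
  · intro i w hw
    refine diam_le_of_forall_dist_le diam_nonneg ?_
    rintro _ ⟨y, hy, rfl⟩ _ ⟨z, hz, rfl⟩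
    have h1 := h i _ (wmap_mem hK w hy) _ (wmap_mem hK w hz) (hsmall w hw y hy z hz)
    have h2 : dist (S.wmap w y) (S.wmap w z) ≤ diam (S.wmap w '' K) :=
      dist_le_diam_of_mem (wmap_image_isBounded hK w) ⟨y, hy, rfl⟩ ⟨z, hz, rfl⟩
    have h3 : ρ * dist (S.wmap w y) (S.wmap w z) ≤ dist (S.wmap w y) (S.wmap w z) :=
      mul_le_of_le_one_left dist_nonneg hρ1.le
    exact (h1.trans h3).trans h2

lemma diam_wmap_pos (hK : IsAttractor S K) (hd : 0 < diam K) (w : List (Fin m)) :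
    0 < diam (S.wmap w '' K) := by
  have hnt : K.Nontrivial := by
    by_contra hs
    rw [diam_subsingleton (not_nontrivial_iff.1 hs)] at hd
    exact lt_irrefl _ hd
  obtain ⟨y, hy, z, hz, hyz⟩ := hnt
  have h1 : S.wmap w y ≠ S.wmap w z := fun he => hyz (wmap_injOn hK w hy hz he)
  exact (dist_pos.2 h1).trans_le
    (dist_le_diam_of_mem (wmap_image_isBounded hK w) ⟨y, hy, rfl⟩ ⟨z, hz, rfl⟩)

/-- The coded point lies in every cylinder set along its code. -/
lemma proj_mem (hK : IsAttractor S K) {proj : (ℕ → Fin m) → Euc d}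
    (hlim : ∀ x, ∀ z ∈ K, Tendsto (fun k => S.wmap (wpre x k) z) atTop (𝓝 (proj x)))
    (x : ℕ → Fin m) (n : ℕ) : proj x ∈ S.wmap (wpre x n) '' K := by
  obtain ⟨z, hz⟩ := hK.2.1
  refine (wmap_image_isCompact hK _).isClosed.mem_of_tendsto (hlim x z hz) ?_
  filter_upwards [eventually_ge_atTop n] with k hk
  obtain ⟨e, rfl⟩ := Nat.exists_eq_add_of_le hk
  rw [wpre_add]
  exact wmap_append_image_subset hK _ _ ⟨z, hz, rfl⟩

end IFS

/-! ### Bernoulli measures on the sequence space -/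

section Bernoulli

variable {m : ℕ}

lemma mem_cylinder_iff (w : List (Fin m)) (x : ℕ → Fin m) :
    x ∈ cylinder w ↔ wpre x w.length = w := Iff.rfl

lemma cylinder_measurable (w : List (Fin m)) : MeasurableSet (cylinder w) :=
  measurableSet_setOfPred.2 (wpre_measurable (fun u => u = w) w.length)

lemma cylinder_append (v w : List (Fin m)) :
    cylinder (v ++ w) = cylinder v ∩ (fun x => shiftSeq x v.length) ⁻¹' cylinder w := by
  ext x
  rw [mem_inter_iff, mem_preimage, mem_cylinder_iff, mem_cylinder_iff, mem_cylinder_iff,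
    List.length_append, wpre_add]
  constructor
  · intro h
    exact List.append_inj h (wpre_length _ _)
  · rintro ⟨h1, h2⟩
    rw [h1, h2]

lemma cylinder_nil : cylinder ([] : List (Fin m)) = univ := by
  ext x; simp [mem_cylinder_iff, wpre]

lemma wpre_take (x : ℕ → Fin m) {a b : ℕ} (hab : a ≤ b) : (wpre x b).take a = wpre x a := by
  obtain ⟨e, rfl⟩ := Nat.exists_eq_add_of_le hab
  rw [wpre_add, List.take_append_of_le_length (by rw [wpre_length]),
    List.take_of_length_le (by rw [wpre_length])]

lemma isPiSystem_cylinder : IsPiSystem (range (cylinder : List (Fin m) → Set (ℕ → Fin m))) := by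
  have key : ∀ v w : List (Fin m), v.length ≤ w.length → (cylinder v ∩ cylinder w).Nonempty →
      cylinder v ∩ cylinder w = cylinder w := by
    rintro v w hvw ⟨x, hxv, hxw⟩
    refine inter_eq_right.2 fun y hy => ?_
    rw [mem_cylinder_iff] at *
    rw [← wpre_take y hvw, hy, ← hxw, wpre_take x hvw, hxv]
  rintro _ ⟨v, rfl⟩ _ ⟨w, rfl⟩ hne
  rcases le_total v.length w.length with h | h
  · exact ⟨w, (key v w h hne).symm⟩
  · rw [inter_comm] at hne ⊢
    exact ⟨v, (key w v h hne).symm⟩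

lemma generateFrom_cylinder :
    (inferInstance : MeasurableSpace (ℕ → Fin m)) =
      MeasurableSpace.generateFrom (range (cylinder : List (Fin m) → Set (ℕ → Fin m))) := by
  apply le_antisymm
  · refine iSup_le fun n => ?_
    rw [← measurable_iff_comap_le]
    refine @measurable_to_countable' _ _ _ _ (_) _ fun i => ?_
    have : (fun x : ℕ → Fin m => x n) ⁻¹' {i} =
        ⋃ (w : List (Fin m)) (_ : w.length = n + 1 ∧ w[n]? = some i), cylinder w := by
      ext x
      simp only [mem_preimage, mem_singleton_iff, mem_iUnion, mem_cylinder_iff, exists_prop]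
      constructor
      · intro h
        refine ⟨wpre x (n + 1), ⟨wpre_length _ _, ?_⟩, by rw [wpre_length]⟩
        simpa [wpre, -List.ofFn_succ] using h
      · rintro ⟨w, ⟨hw, hi⟩, hx⟩
        rw [hw] at hx
        rw [← hx] at hi
        simpa [wpre, -List.ofFn_succ] using hi
    rw [this]
    exact MeasurableSet.iUnion fun w => MeasurableSet.iUnion fun _ =>
      MeasurableSpace.measurableSet_generateFrom ⟨w, rfl⟩
  · refine MeasurableSpace.generateFrom_le ?_
    rintro _ ⟨w, rfl⟩
    exact cylinder_measurable w

lemma ext_cylinder {μ₁ μ₂ : Measure (ℕ → Fin m)} [IsFiniteMeasure μ₁]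
    (h : ∀ w, μ₁ (cylinder w) = μ₂ (cylinder w)) : μ₁ = μ₂ := by
  refine ext_of_generate_finite _ generateFrom_cylinder isPiSystem_cylinder ?_ ?_
  · rintro _ ⟨w, rfl⟩
    exact h w
  · rw [← cylinder_nil]
    exact h []

lemma shiftSeq_measurable (k : ℕ) : Measurable fun x : ℕ → Fin m => shiftSeq x k :=
  measurable_pi_lambda _ fun n => measurable_pi_apply (n + k)

variable {p : Fin m → ℝ} {ν : Measure (ℕ → Fin m)}

lemma prod_map_pos (hp : ∀ i, 0 < p i) (w : List (Fin m)) : 0 < (w.map p).prod :=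
  List.prod_pos (by simpa using fun i _ => hp i)

lemma cylinder_append_measure (hp : ∀ i, 0 < p i)
    (hcyl : ∀ w : List (Fin m), ν (cylinder w) = ENNReal.ofReal ((w.map p).prod))
    (v w : List (Fin m)) : ν (cylinder (v ++ w)) = ν (cylinder v) * ν (cylinder w) := by
  rw [hcyl, hcyl, hcyl, ← ENNReal.ofReal_mul (prod_map_pos hp v).le, List.map_append,
    List.prod_append]

lemma shift_measurePreserving [IsProbabilityMeasure ν] (hps : ∑ i, p i = 1) (hp : ∀ i, 0 < p i)
    (hcyl : ∀ w : List (Fin m), ν (cylinder w) = ENNReal.ofReal ((w.map p).prod)) :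
    MeasurePreserving (fun x : ℕ → Fin m => shiftSeq x 1) ν ν := by
  refine ⟨shiftSeq_measurable 1, ?_⟩
  have : IsFiniteMeasure (ν.map fun x : ℕ → Fin m => shiftSeq x 1) :=
    Measure.isFiniteMeasure_map _ _
  refine ext_cylinder fun w => ?_
  rw [Measure.map_apply (shiftSeq_measurable 1) (cylinder_measurable w)]
  have h1 : (fun x : ℕ → Fin m => shiftSeq x 1) ⁻¹' cylinder w =
      ⋃ i ∈ Finset.univ, cylinder ([i] ++ w) := by
    ext x
    simp only [cylinder_append, mem_preimage, mem_iUnion, mem_inter_iff, mem_cylinder_iff,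
      List.length_singleton]
    constructor
    · exact fun h => ⟨x 0, Finset.mem_univ _, by simp [wpre], h⟩
    · rintro ⟨i, -, -, h⟩
      exact h
  rw [h1, measure_biUnion_finset]
  · have h2 : ∀ i, ν (cylinder ([i] ++ w)) = ENNReal.ofReal (p i) * ν (cylinder w) := by
      intro i
      rw [cylinder_append_measure hp hcyl, hcyl [i]]
      simp
    simp_rw [h2]
    rw [← Finset.sum_mul, ← ENNReal.ofReal_sum_of_nonneg fun i _ => (hp i).le, hps]
    simp
  · intro i _ j _ hij
    refine disjoint_left.2 fun x hx hy => hij ?_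
    simp only [cylinder_append, mem_inter_iff, mem_cylinder_iff] at hx hy
    have := hx.1.symm.trans hy.1
    simpa using this
  · exact fun i _ => cylinder_measurable _

/-- The shift is ergodic: an invariant set `A` is independent of every cylinder, hence of
itself. -/
lemma shift_ergodic [IsProbabilityMeasure ν] (hps : ∑ i, p i = 1) (hp : ∀ i, 0 < p i)
    (hcyl : ∀ w : List (Fin m), ν (cylinder w) = ENNReal.ofReal ((w.map p).prod)) :
    Ergodic (fun x : ℕ → Fin m => shiftSeq x 1) ν := by
  refine { shift_measurePreserving hps hp hcyl with aeconst_set := fun A hA hinv => ?_ }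
  have hiter : ∀ n, (fun x : ℕ → Fin m => shiftSeq x n) ⁻¹' A = A := by
    intro n
    induction n with
    | zero => rfl
    | succ n ih =>
      calc (fun x : ℕ → Fin m => shiftSeq x (n + 1)) ⁻¹' A
          = (fun x : ℕ → Fin m => shiftSeq x n) ⁻¹'
              ((fun x : ℕ → Fin m => shiftSeq x 1) ⁻¹' A) := by
            ext x
            have : shiftSeq x (n + 1) = shiftSeq (shiftSeq x n) 1 := by
              funext j; simp [shiftSeq, add_comm, add_left_comm]
            simp [this]
        _ = A := by rw [hinv, ih]
  have hindep : ∀ w : List (Fin m), ∀ B : Set (ℕ → Fin m), MeasurableSet B →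
      ν ((fun x => shiftSeq x w.length) ⁻¹' B ∩ cylinder w) = ν (cylinder w) * ν B := by
    intro w B hB
    have hmeas := shiftSeq_measurable (m := m) w.length
    have heq : (ν.restrict (cylinder w)).map (fun x => shiftSeq x w.length) =
        ν (cylinder w) • ν := by
      refine ext_cylinder fun v => ?_
      rw [Measure.map_apply hmeas (cylinder_measurable v),
        Measure.restrict_apply (hmeas (cylinder_measurable v)), inter_comm, ← cylinder_append,
        cylinder_append_measure hp hcyl]
      simp
    have := congrArg (fun μ => μ B) heq
    simpa [Measure.map_apply hmeas hB, Measure.restrict_apply (hmeas hB)] using this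
  have hself : ν.restrict A = ν A • ν := by
    refine ext_cylinder fun w => ?_
    rw [Measure.restrict_apply (cylinder_measurable w)]
    have := hindep w A hA
    rw [hiter] at this
    rw [inter_comm, this]
    simp [mul_comm]
  have h2 : ν A = ν A * ν A := by
    have := congrArg (fun μ => μ A) hself
    simpa using this
  rw [eventuallyConst_set]
  have h01 : ν A = 0 ∨ ν A = 1 := by
    by_cases h0 : ν A = 0
    · exact Or.inl h0
    · right
      have h3 : ν A * 1 = ν A * ν A := by rw [mul_one]; exact h2
      exact ((ENNReal.mul_right_inj h0 (measure_ne_top ν A)).1 h3).symm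
  rcases h01 with h | h
  · exact Or.inr (measure_eq_zero_iff_ae_notMem.1 h)
  · exact Or.inl ((prob_compl_eq_zero_iff hA).2 h)

/-- A measurable function that does not increase along the shift is almost surely constant. -/
lemma ae_eq_const_of_shift_le [IsProbabilityMeasure ν] (hps : ∑ i, p i = 1)
    (hp : ∀ i, 0 < p i)
    (hcyl : ∀ w : List (Fin m), ν (cylinder w) = ENNReal.ofReal ((w.map p).prod))
    {g : (ℕ → Fin m) → ℝ} (hg : Measurable g) (hle : ∀ x, g (shiftSeq x 1) ≤ g x) :
    ∃ c, ∀ᵐ x ∂ν, g x = c := by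
  have herg := shift_ergodic hps hp hcyl
  -- rational superlevel sets separate points, and each contains its preimage under the shift
  have hsep : HasCountableSeparatingOn ℝ (fun U : Set ℝ => ∃ q : ℚ, U = Ioi (q : ℝ)) univ := by
    refine ⟨⟨range fun q : ℚ => Ioi (q : ℝ), countable_range _, ?_, ?_⟩⟩
    · rintro _ ⟨q, rfl⟩
      exact ⟨q, rfl⟩
    · intro a _ b _ h
      by_contra hab
      rcases lt_or_gt_of_ne hab with hlt | hlt
      · obtain ⟨q, h1, h2⟩ := exists_rat_btwn hlt
        exact absurd ((h _ ⟨q, rfl⟩).2 h2) (not_lt.2 h1.le)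
      · obtain ⟨q, h1, h2⟩ := exists_rat_btwn hlt
        exact absurd ((h _ ⟨q, rfl⟩).1 h2) (not_lt.2 h1.le)
  refine exists_eventuallyEq_const_of_forall_separating
    (fun U : Set ℝ => ∃ q : ℚ, U = Ioi (q : ℝ)) ?_
  rintro _ ⟨q, rfl⟩
  have := herg.ae_empty_or_univ_of_preimage_ae_le (s := g ⁻¹' Ioi (q : ℝ))
    (hg measurableSet_Ioi).nullMeasurableSet
    (Eventually.of_forall fun x (hx : (q : ℝ) < g (shiftSeq x 1)) => hx.trans_le (hle x))
  rcases this with h | h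
  · exact Or.inr (eventuallyEq_empty.1 h)
  · exact Or.inl (eventuallyEq_univ.1 h)

lemma log_prod_map (hp : ∀ i, 0 < p i) (x : ℕ → Fin m) (n : ℕ) :
    Real.log (((wpre x n).map p).prod) = ∑ j ∈ Finset.range n, Real.log (p (x j)) := by
  rw [wpre, List.map_ofFn, List.prod_ofFn]
  simp only [Function.comp_apply]
  rw [Real.log_prod fun j _ => (hp _).ne']
  exact Fin.sum_univ_eq_sum_range (fun j => Real.log (p (x j))) n

/-- A measure with the Bernoulli values on cylinders is an infinite product measure, which makes
the coordinates independent and identically distributed. -/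
lemma eq_infinitePi [IsProbabilityMeasure ν] (hps : ∑ i, p i = 1) (hp : ∀ i, 0 < p i)
    (hcyl : ∀ w : List (Fin m), ν (cylinder w) = ENNReal.ofReal ((w.map p).prod)) :
    ∃ P : Measure (Fin m), IsProbabilityMeasure P ∧ (∀ i, P {i} = ENNReal.ofReal (p i)) ∧
      ν = Measure.infinitePi fun _ : ℕ => P := by
  set P : Measure (Fin m) := ∑ i, ENNReal.ofReal (p i) • Measure.dirac i with hP
  have hPi : ∀ i, P {i} = ENNReal.ofReal (p i) := by
    intro i
    simp [hP, Measure.finsetSum_apply, Set.indicator_apply]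
  have hPp : IsProbabilityMeasure P := by
    refine ⟨?_⟩
    simp only [hP, Measure.finsetSum_apply, Measure.smul_apply, measure_univ, smul_eq_mul, mul_one]
    rw [← ENNReal.ofReal_sum_of_nonneg fun i _ => (hp i).le, hps, ENNReal.ofReal_one]
  refine ⟨P, hPp, hPi, ext_cylinder fun w => ?_⟩
  obtain ⟨n, u, rfl⟩ : ∃ n, ∃ u : Fin n → Fin m, w = List.ofFn u :=
    ⟨w.length, w.get, (List.ofFn_get w).symm⟩
  have h1 : cylinder (List.ofFn u) = (↑(Finset.range n) : Set ℕ).pi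
      fun j => if h : j < n then {u ⟨j, h⟩} else univ := by
    ext x
    rw [mem_cylinder_iff, List.length_ofFn, wpre, List.ofFn_inj, funext_iff, Set.mem_pi]
    constructor
    · intro h j hj
      have hj' : j < n := by simpa using hj
      simpa [hj'] using h ⟨j, hj'⟩
    · intro h j
      simpa using h j (by simp)
  rw [hcyl, h1, Measure.infinitePi_pi _ fun j _ => by measurability, List.map_ofFn,
    List.prod_ofFn]
  simp only [Function.comp_apply]
  rw [ENNReal.ofReal_prod_of_nonneg fun j _ => (hp _).le,
    ← Fin.prod_univ_eq_prod_range (fun j => P (if h : j < n then {u ⟨j, h⟩} else univ)) n]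
  refine Finset.prod_congr rfl fun j _ => ?_
  simp [hPi]

/-- The Shannon–McMillan–Breiman theorem for Bernoulli measures, an instance of the strong law
of large numbers. -/
lemma ae_tendsto_log_cylinder [IsProbabilityMeasure ν] (hps : ∑ i, p i = 1) (hp : ∀ i, 0 < p i)
    (hcyl : ∀ w : List (Fin m), ν (cylinder w) = ENNReal.ofReal ((w.map p).prod)) :
    ∀ᵐ x ∂ν, Tendsto (fun n : ℕ => Real.log (((wpre x n).map p).prod) / n) atTop
      (𝓝 (∑ i, p i * Real.log (p i))) := by
  obtain ⟨P, hPp, hPi, rfl⟩ := eq_infinitePi hps hp hcyl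
  set X : ℕ → (ℕ → Fin m) → ℝ := fun n x => Real.log (p (x n)) with hX
  have hφ : Measurable fun i : Fin m => Real.log (p i) := Measurable.of_discrete
  have hmap : ∀ n, (Measure.infinitePi fun _ : ℕ => P).map (fun x => x n) = P := fun n =>
    Measure.infinitePi_map_eval _ n
  have hXm : ∀ n, Measurable (X n) := fun n => hφ.comp (measurable_pi_apply n)
  have hXmap : ∀ n, (Measure.infinitePi fun _ : ℕ => P).map (X n) =
      P.map fun i => Real.log (p i) := by
    intro n
    conv_rhs => rw [← hmap n]
    rw [Measure.map_map hφ (measurable_pi_apply n)]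
    rfl
  have hint : Integrable (fun i : Fin m => Real.log (p i)) P := Integrable.of_finite
  have hint0 : Integrable (X 0) (Measure.infinitePi fun _ : ℕ => P) := by
    have h := hint
    rw [← hmap 0] at h
    exact h.comp_measurable (measurable_pi_apply 0)
  have hindep := ProbabilityTheory.iIndepFun_infinitePi (P := fun _ : ℕ => P)
    (X := fun _ i => Real.log (p i)) fun _ => hφ
  have hE : ∫ x, X 0 x ∂(Measure.infinitePi fun _ : ℕ => P) = ∑ i, p i * Real.log (p i) := by
    have h1 : ∫ x, X 0 x ∂(Measure.infinitePi fun _ : ℕ => P) =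
        ∫ i, Real.log (p i) ∂((Measure.infinitePi fun _ : ℕ => P).map fun x => x 0) :=
      (integral_map (φ := fun x : ℕ → Fin m => x 0) (measurable_pi_apply 0).aemeasurable
        hφ.aestronglyMeasurable).symm
    rw [h1, hmap 0, integral_fintype hint]
    refine Finset.sum_congr rfl fun i _ => ?_
    rw [measureReal_def, hPi, ENNReal.toReal_ofReal (hp i).le, smul_eq_mul]
  have := ProbabilityTheory.strong_law_ae_real X hint0
    (fun i j hij => hindep.indepFun hij)
    (fun i => ⟨(hXm i).aemeasurable, (hXm 0).aemeasurable, by rw [hXmap, hXmap]⟩)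
  rw [hE] at this
  filter_upwards [this] with x hx
  simpa only [log_prod_map hp] using hx

end Bernoulli

/-! ### The stopping time at scale `2⁻ᵏ` -/

/-- The generation at which the cylinder sets along `x` first have diameter at most `2⁻ᵏ`
(`0` if this never happens, which the uniform shrinking of cylinder sets excludes). -/
def stopTime {d m : ℕ} (S : C1IFS d m) (K : Set (Euc d)) (k : ℕ) (x : ℕ → Fin m) : ℕ :=
  sInf {n | diam (S.wmap (wpre x n) '' K) ≤ ((2 : ℝ) ^ k)⁻¹}

section Stop

variable {d m : ℕ} {S : C1IFS d m} {K : Set (Euc d)}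

lemma diam_stopTime_le {C ρ : ℝ} (hρ0 : 0 < ρ) (hρ1 : ρ < 1)
    (hb : ∀ w : List (Fin m), diam (S.wmap w '' K) ≤ C * ρ ^ w.length) (k : ℕ)
    (x : ℕ → Fin m) :
    diam (S.wmap (wpre x (stopTime S K k x)) '' K) ≤ ((2 : ℝ) ^ k)⁻¹ := by
  have hne : {n | diam (S.wmap (wpre x n) '' K) ≤ ((2 : ℝ) ^ k)⁻¹}.Nonempty := by
    have h := (tendsto_pow_atTop_nhds_zero_of_lt_one hρ0.le hρ1).const_mul C
    rw [mul_zero] at h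
    obtain ⟨n, hn⟩ := (h.eventually (gt_mem_nhds
      (show (0 : ℝ) < ((2 : ℝ) ^ k)⁻¹ by positivity))).exists
    refine ⟨n, ?_⟩
    have := hb (wpre x n)
    rw [wpre_length] at this
    exact this.trans hn.le
  exact Nat.sInf_mem hne

lemma lt_diam_of_lt_stopTime (k : ℕ) (x : ℕ → Fin m) {j : ℕ} (hj : j < stopTime S K k x) :
    ((2 : ℝ) ^ k)⁻¹ < diam (S.wmap (wpre x j) '' K) :=
  not_le.1 (Nat.notMem_of_lt_sInf hj)

lemma wpre_stopTime_mem_lamCut {C ρ : ℝ} (hρ0 : 0 < ρ) (hρ1 : ρ < 1)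
    (hb : ∀ w : List (Fin m), diam (S.wmap w '' K) ≤ C * ρ ^ w.length) {k : ℕ}
    (hk : ((2 : ℝ) ^ k)⁻¹ < diam K) (x : ℕ → Fin m) :
    wpre x (stopTime S K k x) ∈ lamCut S K k := by
  have h1 := diam_stopTime_le hρ0 hρ1 hb k x
  obtain ⟨n, hn⟩ : ∃ n, stopTime S K k x = n + 1 := by
    refine Nat.exists_eq_succ_of_ne_zero fun h0 => ?_
    rw [h0] at h1
    have h2 : S.wmap (wpre x 0) '' K = K := by simp [wpre, C1IFS.wmap]
    rw [h2] at h1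
    exact absurd hk (not_lt.2 h1)
  refine ⟨?_, h1, ?_⟩
  · rw [← List.length_pos_iff, wpre_length, hn]
    exact n.succ_pos
  · rw [hn, wpre_succ_dropLast]
    exact lt_diam_of_lt_stopTime k x (by omega)

/-- Words of the cut at scale `2⁻ᵏ` have length `O(k)`, by uniform exponential shrinking. -/
lemma exists_lamCut_length_le {C ρ : ℝ} (hC : 0 < C) (hρ0 : 0 < ρ) (hρ1 : ρ < 1)
    (hb : ∀ w : List (Fin m), diam (S.wmap w '' K) ≤ C * ρ ^ w.length) :
    ∃ γ : ℕ, ∀ k, ∀ w ∈ lamCut S K k, w.length ≤ γ * (k + 1) := by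
  have hlim := tendsto_pow_atTop_nhds_zero_of_lt_one hρ0.le hρ1
  obtain ⟨M, hM⟩ := (hlim.eventually (gt_mem_nhds (show (0 : ℝ) < 2⁻¹ by norm_num))).exists
  obtain ⟨N, hN⟩ := (hlim.eventually (gt_mem_nhds (show (0 : ℝ) < C⁻¹ by positivity))).exists
  refine ⟨M + N, fun k w hw => ?_⟩
  obtain ⟨hw0, -, hw2⟩ := hw
  by_contra hlt
  have h1 : M * k + N ≤ w.dropLast.length := by
    rw [List.length_dropLast]
    have : M * k + N ≤ (M + N) * (k + 1) := by nlinarith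
    omega
  have h2 : C * ρ ^ w.dropLast.length ≤ ((2 : ℝ) ^ k)⁻¹ :=
    calc C * ρ ^ w.dropLast.length ≤ C * ρ ^ (M * k + N) :=
          mul_le_mul_of_nonneg_left (pow_le_pow_of_le_one hρ0.le hρ1.le h1) hC.le
      _ = (ρ ^ M) ^ k * (C * ρ ^ N) := by rw [pow_add, pow_mul]; ring
      _ ≤ (2⁻¹) ^ k * (C * C⁻¹) := by gcongr
      _ = ((2 : ℝ) ^ k)⁻¹ := by rw [mul_inv_cancel₀ hC.ne', mul_one, inv_pow]
  exact absurd (hb w.dropLast) (not_le.2 (h2.trans_lt hw2))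

/-- The exponential rate of `P` in the generation turns into its rate in the scale: if `n k` is
the first index at which `D ≤ 2⁻ᵏ`, then `k log 2 / n k → l`. -/
lemma tendsto_along_stop {D P : ℕ → ℝ} {n : ℕ → ℕ} {l h : ℝ} (hD : ∀ j, 0 < D j) (hl : 0 < l)
    (hDl : Tendsto (fun j : ℕ => -(Real.log (D j) / j)) atTop (𝓝 l))
    (hP : Tendsto (fun j : ℕ => P j / j) atTop (𝓝 (-h)))
    (h1 : ∀ k, D (n k) ≤ ((2 : ℝ) ^ k)⁻¹) (h2 : ∀ k, ∀ j < n k, ((2 : ℝ) ^ k)⁻¹ < D j) :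
    Tendsto (fun k : ℕ => P (n k) / -(k * Real.log 2)) atTop (𝓝 (h / l)) := by
  have hn : Tendsto n atTop atTop := by
    refine tendsto_atTop.2 fun J => ?_
    have h3 : ∀ᶠ k : ℕ in atTop, ∀ j ∈ Finset.range J, ((2 : ℝ) ^ k)⁻¹ < D j := by
      refine (eventually_all_finset _).2 fun j _ => ?_
      have := tendsto_pow_atTop_nhds_zero_of_lt_one (r := (2 : ℝ)⁻¹) (by norm_num) (by norm_num)
      simpa only [inv_pow] using this.eventually (gt_mem_nhds (hD j))
    filter_upwards [h3] with k hk
    by_contra hlt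
    exact absurd (h1 k) (not_le.2 (hk _ (Finset.mem_range.2 (not_le.1 hlt))))
  have hlog : ∀ k : ℕ, Real.log (((2 : ℝ) ^ k)⁻¹) = -(k * Real.log 2) := fun k => by
    rw [Real.log_inv, Real.log_pow]
  have hup : Tendsto (fun k => -(Real.log (D (n k)) / n k)) atTop (𝓝 l) := hDl.comp hn
  -- the factor `1 - 1 / n k` turns the denominator `n k - 1` into `n k`
  have hlow : Tendsto (fun k => -(Real.log (D (n k - 1)) / (n k - 1 : ℕ)) *
      (1 - 1 / (n k : ℝ))) atTop (𝓝 l) := by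
    have a1 : Tendsto (fun j : ℕ => j - 1) atTop atTop := tendsto_sub_atTop_nat 1
    have a2 := (hDl.comp (a1.comp hn)).mul
      ((tendsto_const_nhds (x := (1 : ℝ))).sub (tendsto_one_div_atTop_nhds_zero_nat.comp hn))
    simpa using a2
  have hrate : Tendsto (fun k : ℕ => (k * Real.log 2) / n k) atTop (𝓝 l) := by
    refine tendsto_of_tendsto_of_tendsto_of_le_of_le' hlow hup ?_ ?_
    · filter_upwards [hn.eventually_ge_atTop 2] with k hk
      have h3 := Real.log_le_log (by positivity) (h2 k (n k - 1) (by omega)).le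
      rw [hlog] at h3
      have h4 : ((n k - 1 : ℕ) : ℝ) = n k - 1 := by
        rw [Nat.cast_sub (by omega)]; simp
      have h5 : (2 : ℝ) ≤ n k := by exact_mod_cast hk
      have h6 : (0 : ℝ) < (n k : ℝ) - 1 := by linarith
      have h7 : -(Real.log (D (n k - 1)) / (n k - 1 : ℕ)) * (1 - 1 / (n k : ℝ)) =
          -Real.log (D (n k - 1)) / n k := by
        rw [h4]; field_simp
      rw [h7]
      gcongr
      linarith
    · filter_upwards with k
      have h3 := Real.log_le_log (hD _) (h1 k)
      rw [hlog] at h3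
      rw [← neg_div]
      gcongr
      linarith
  have hfin := ((hP.comp hn).div hrate hl.ne').neg
  rw [neg_div, neg_neg] at hfin
  refine hfin.congr' ?_
  filter_upwards [hn.eventually_ge_atTop 1] with k hk
  have h5 : (n k : ℝ) ≠ 0 := by
    have : (1 : ℝ) ≤ n k := by exact_mod_cast hk
    linarith
  change -(P (n k) / n k / (k * Real.log 2 / n k)) = _
  rw [div_div_div_cancel_right₀ h5, div_neg]

end Stop

/-! ### Counting overlaps -/

section Count

variable {d m : ℕ} {S : C1IFS d m} {K : Set (Euc d)}

/-- Without exact overlaps, words of equal length are counted faithfully by `t k`; since the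
words of the cut have at most `N` letters, a ball of radius `2⁻ᵏ` meets at most
`(N + 1) t k` of the corresponding cylinder sets. -/
lemma measure_le_count {C ρ : ℝ} (hρ0 : 0 < ρ) (hρ1 : ρ < 1)
    (hb : ∀ w : List (Fin m), diam (S.wmap w '' K) ≤ C * ρ ^ w.length)
    {k t N : ℕ} (hk : ((2 : ℝ) ^ k)⁻¹ < diam K)
    (hN : ∀ w ∈ lamCut S K k, w.length ≤ N) (y : Euc d)
    (ht : Set.ncard {g : Euc d → Euc d | ∃ w ∈ lamCut S K k, S.wmap w = g ∧
        (S.wmap w '' K ∩ closedBall y (((2 : ℝ) ^ k)⁻¹)).Nonempty} ≤ t)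
    (hNEO : NoExactOverlaps S) {p : Fin m → ℝ} {ν : Measure (ℕ → Fin m)}
    (hcyl : ∀ w : List (Fin m), ν (cylinder w) = ENNReal.ofReal ((w.map p).prod))
    {proj : (ℕ → Fin m) → Euc d} (hpm : ∀ x n, proj x ∈ S.wmap (wpre x n) '' K)
    {q : ℝ} {E : Set (ℕ → Fin m)}
    (hE1 : ∀ x ∈ E, proj x ∈ closedBall y (((2 : ℝ) ^ k)⁻¹))
    (hE2 : ∀ x ∈ E, ((wpre x (stopTime S K k x)).map p).prod ≤ q) :
    ν E ≤ ENNReal.ofReal ((N + 1) * t * q) := by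
  set G : Set (Euc d → Euc d) := {g | ∃ w ∈ lamCut S K k, S.wmap w = g ∧
        (S.wmap w '' K ∩ closedBall y (((2 : ℝ) ^ k)⁻¹)).Nonempty} with hG
  have hGf : G.Finite := by
    refine ((List.finite_length_le (Fin m) N).image S.wmap).subset ?_
    rintro g ⟨w, hw, rfl, -⟩
    exact ⟨w, hN w hw, rfl⟩
  set W : ℕ → Set (List (Fin m)) := fun n => {w | w.length = n ∧ w ∈ lamCut S K k ∧
    (S.wmap w '' K ∩ closedBall y (((2 : ℝ) ^ k)⁻¹)).Nonempty ∧ (w.map p).prod ≤ q} with hW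
  have hWf : ∀ n, (W n).Finite := fun n =>
    (List.finite_length_eq (Fin m) n).subset fun w hw => hw.1
  have hWt : ∀ n, (hWf n).toFinset.card ≤ t := by
    intro n
    rw [← Set.ncard_eq_toFinset_card _ (hWf n)]
    refine le_trans (Set.ncard_le_ncard_of_injOn S.wmap ?_ ?_ hGf) ht
    · rintro w ⟨-, h2, h3, -⟩
      exact ⟨w, h2, rfl, h3⟩
    · intro v hv w hw hvw
      by_contra hne
      exact hNEO v w (hv.1.trans hw.1.symm) hne hvw
  have hcover : E ⊆ ⋃ n ∈ Finset.range (N + 1), ⋃ w ∈ (hWf n).toFinset, cylinder w := by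
    intro x hx
    have hlc := wpre_stopTime_mem_lamCut hρ0 hρ1 hb hk x
    refine mem_iUnion₂.2 ⟨stopTime S K k x, ?_, mem_iUnion₂.2
      ⟨wpre x (stopTime S K k x), ?_, ?_⟩⟩
    · have := hN _ hlc
      rw [wpre_length] at this
      exact Finset.mem_range.2 (by omega)
    · rw [Set.Finite.mem_toFinset]
      exact ⟨wpre_length _ _, hlc, ⟨proj x, hpm x _, hE1 x hx⟩, hE2 x hx⟩
    · rw [mem_cylinder_iff, wpre_length]
  calc ν E ≤ ν (⋃ n ∈ Finset.range (N + 1), ⋃ w ∈ (hWf n).toFinset, cylinder w) :=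
        measure_mono hcover
    _ ≤ ∑ n ∈ Finset.range (N + 1), ν (⋃ w ∈ (hWf n).toFinset, cylinder w) :=
        measure_biUnion_finset_le _ _
    _ ≤ ∑ n ∈ Finset.range (N + 1), ∑ w ∈ (hWf n).toFinset, ν (cylinder w) :=
        Finset.sum_le_sum fun n _ => measure_biUnion_finset_le _ _
    _ ≤ ∑ n ∈ Finset.range (N + 1), ∑ w ∈ (hWf n).toFinset, ENNReal.ofReal q := by
        refine Finset.sum_le_sum fun n _ => Finset.sum_le_sum fun w hw => ?_
        rw [hcyl]
        exact ENNReal.ofReal_le_ofReal ((Set.Finite.mem_toFinset _).1 hw).2.2.2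
    _ ≤ ∑ n ∈ Finset.range (N + 1), (t : ℝ≥0∞) * ENNReal.ofReal q := by
        refine Finset.sum_le_sum fun n _ => ?_
        rw [Finset.sum_const, nsmul_eq_mul]
        gcongr
        exact hWt n
    _ = ENNReal.ofReal ((N + 1) * t * q) := by
        rw [Finset.sum_const, nsmul_eq_mul, Finset.card_range, ENNReal.ofReal_mul (by positivity),
          ENNReal.ofReal_mul (by positivity), ENNReal.ofReal_natCast, mul_assoc]
        congr 1
        rw [← Nat.cast_succ, ENNReal.ofReal_natCast]

/-- The multiplicity `(γ (k + 1) + 1) t k` is subexponential, so it is eventually absorbed by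
lowering the exponent from `b` to `a`. -/
lemma eventually_count_le {t : ℕ → ℕ}
    (ht : Tendsto (fun k : ℕ => Real.log (t k) / k) atTop (𝓝 0)) (γ : ℕ) {a b : ℝ}
    (hab : a < b) :
    ∀ᶠ k : ℕ in atTop, (((γ * (k + 1) : ℕ) : ℝ) + 1) * t k * Real.exp (-(k * Real.log 2) * b) ≤
      Real.exp (-(k * Real.log 2) * a) := by
  have hL : 0 < Real.log 2 := Real.log_pos one_lt_two
  -- each of the two subexponential factors receives half of the gap `log 2 * (b - a)`
  set η : ℝ := Real.log 2 * (b - a) / 2 with hη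
  have hη0 : 0 < η := by have := sub_pos.2 hab; positivity
  have h1 : ∀ᶠ k : ℕ in atTop, (t k : ℝ) ≤ Real.exp (η * k) := by
    filter_upwards [ht.eventually (gt_mem_nhds hη0), eventually_gt_atTop 0] with k hk hk0
    have hk0' : (0 : ℝ) < k := by exact_mod_cast hk0
    rcases Nat.eq_zero_or_pos (t k) with h0 | h0
    · rw [h0]; simpa using (Real.exp_pos _).le
    · rw [div_lt_iff₀ hk0'] at hk
      have h0' : (0 : ℝ) < t k := by exact_mod_cast h0
      exact (Real.log_le_iff_le_exp h0').1 hk.le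
  have h2 : ∀ᶠ k : ℕ in atTop, ((γ * (k + 1) : ℕ) : ℝ) + 1 ≤ Real.exp (η * k) := by
    have a1 : Tendsto (fun k : ℕ => Real.exp (η * k) / k ^ 1) atTop atTop := by
      have e1 := (tendsto_exp_mul_div_rpow_atTop 1 η hη0).comp tendsto_natCast_atTop_atTop
      refine e1.congr fun k => ?_
      simp
    filter_upwards [a1.eventually_ge_atTop (2 * γ + 1), eventually_ge_atTop 1] with k hk hk1
    have hk1' : (1 : ℝ) ≤ k := by exact_mod_cast hk1
    rw [pow_one, le_div_iff₀ (by positivity)] at hk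
    push_cast
    have : (0 : ℝ) ≤ γ := by positivity
    nlinarith
  filter_upwards [h1, h2] with k hk1 hk2
  calc (((γ * (k + 1) : ℕ) : ℝ) + 1) * t k * Real.exp (-(k * Real.log 2) * b)
      ≤ Real.exp (η * k) * Real.exp (η * k) * Real.exp (-(k * Real.log 2) * b) := by gcongr
    _ = Real.exp (-(k * Real.log 2) * a) := by
        rw [← Real.exp_add, ← Real.exp_add]
        congr 1
        rw [hη]; ring

end Count

/-! ### Local dimensions along dyadic radii -/

section Local

variable {d m : ℕ} {S : C1IFS d m} {K : Set (Euc d)}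

/-- A ball of radius `2⁻ᵏ` about a coded point contains the image of the stopped cylinder. -/
lemma le_measure_closedBall (hK : IsAttractor S K) {C ρ : ℝ} (hρ0 : 0 < ρ) (hρ1 : ρ < 1)
    (hb : ∀ w : List (Fin m), diam (S.wmap w '' K) ≤ C * ρ ^ w.length)
    {p : Fin m → ℝ} {ν : Measure (ℕ → Fin m)}
    (hcyl : ∀ w : List (Fin m), ν (cylinder w) = ENNReal.ofReal ((w.map p).prod))
    {proj : (ℕ → Fin m) → Euc d} (hproj : Measurable proj)
    (hpm : ∀ x n, proj x ∈ S.wmap (wpre x n) '' K) (x : ℕ → Fin m) (k : ℕ) :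
    ENNReal.ofReal (((wpre x (stopTime S K k x)).map p).prod) ≤
      ν.map proj (closedBall (proj x) (((2 : ℝ) ^ k)⁻¹)) := by
  rw [Measure.map_apply hproj measurableSet_closedBall, ← hcyl]
  refine measure_mono fun y hy => ?_
  rw [mem_cylinder_iff, wpre_length] at hy
  have h1 := hpm y (stopTime S K k x)
  rw [hy] at h1
  exact (dist_le_diam_of_mem (wmap_image_isBounded hK _) h1 (hpm x _)).trans
    (diam_stopTime_le hρ0 hρ1 hb k x)

lemma tendsto_two_pow_inv : Tendsto (fun k : ℕ => ((2 : ℝ) ^ k)⁻¹) atTop (𝓝[>] 0) := by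
  refine tendsto_nhdsWithin_iff.2 ⟨?_, Eventually.of_forall fun k => ?_⟩
  · have := tendsto_pow_atTop_nhds_zero_of_lt_one (r := (2 : ℝ)⁻¹) (by norm_num) (by norm_num)
    simpa only [inv_pow] using this
  · exact mem_Ioi.2 (by positivity)

/-- The lower bound on the local dimension. On the set `A` of sequences for which the
`ν`-measure of the stopped cylinder sets is at most `2^(-b k)` for all `k ≥ N`, the image of
`ν.restrict A` satisfies a Frostman condition by counting, and the Besicovitch density theorem
transfers the condition to `ν.map proj`. -/
lemma ae_lower_of_le {C ρ : ℝ} (hC : 0 < C) (hρ0 : 0 < ρ) (hρ1 : ρ < 1) (hd : 0 < diam K)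
    (hb : ∀ w : List (Fin m), diam (S.wmap w '' K) ≤ C * ρ ^ w.length)
    (hAWSC : AWSC S K) (hNEO : NoExactOverlaps S) {p : Fin m → ℝ}
    {ν : Measure (ℕ → Fin m)} [IsProbabilityMeasure ν]
    (hcyl : ∀ w : List (Fin m), ν (cylinder w) = ENNReal.ofReal ((w.map p).prod))
    {proj : (ℕ → Fin m) → Euc d} (hproj : Measurable proj)
    (hpm : ∀ x n, proj x ∈ S.wmap (wpre x n) '' K)
    {a b : ℝ} (hab : a < b) {N : ℕ} {A : Set (ℕ → Fin m)}
    (hA : ∀ x ∈ A, ∀ k ≥ N, ((wpre x (stopTime S K k x)).map p).prod ≤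
      Real.exp (-(k * Real.log 2) * b)) :
    ∀ᵐ x ∂ν, x ∈ A → ∀ᶠ k : ℕ in atTop,
      ν.map proj (closedBall (proj x) (((2 : ℝ) ^ k)⁻¹)) ≤
        ENNReal.ofReal (Real.exp (-(k * Real.log 2) * a)) := by
  obtain ⟨t, ht, htlim⟩ := hAWSC
  obtain ⟨γ, hγ⟩ := exists_lamCut_length_le hC hρ0 hρ1 hb
  set μ := ν.map proj with hμ
  set μA := (ν.restrict A).map proj with hμA
  have hμp : IsProbabilityMeasure μ := Measure.isProbabilityMeasure_map hproj.aemeasurable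
  have hle : μA ≤ μ := Measure.map_mono Measure.restrict_le_self hproj
  obtain ⟨c, hac, hcb⟩ := exists_between hab
  have hfrost : ∀ᶠ k : ℕ in atTop, ∀ y, μA (closedBall y (((2 : ℝ) ^ k)⁻¹)) ≤
      ENNReal.ofReal (Real.exp (-(k * Real.log 2) * c)) := by
    have hk1 : ∀ᶠ k : ℕ in atTop, ((2 : ℝ) ^ k)⁻¹ < diam K :=
      (tendsto_two_pow_inv.mono_right nhdsWithin_le_nhds).eventually (gt_mem_nhds hd)
    filter_upwards [hk1, eventually_count_le htlim γ hcb, eventually_ge_atTop N]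
      with k hk hcount hkN y
    rw [hμA, Measure.map_apply hproj measurableSet_closedBall,
      Measure.restrict_apply (hproj measurableSet_closedBall)]
    exact (measure_le_count hρ0 hρ1 hb hk (hγ k) y (ht k y) hNEO hcyl hpm
      (fun x hx => hx.1) (fun x hx => hA x hx.2 k hkN)).trans (ENNReal.ofReal_le_ofReal hcount)
  have hac' : μA ≪ μ := Measure.absolutelyContinuous_of_le hle
  have hfin : IsFiniteMeasure μA := isFiniteMeasure_of_le μ hle
  have hdens : ∀ᵐ y ∂μA, Tendsto (fun r => μA (closedBall y r) / μ (closedBall y r))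
      (𝓝[>] 0) (𝓝 (μA.rnDeriv μ y)) :=
    hac'.ae_le (Besicovitch.ae_tendsto_rnDeriv μA μ)
  -- `μA ≪ μ`, so the density is positive `μA`-almost everywhere
  have hldec : μA.HaveLebesgueDecomposition μ :=
    Measure.haveLebesgueDecomposition_of_sigmaFinite μA μ
  have hpos := Measure.rnDeriv_pos hac'
  have hae := ae_of_ae_map hproj.aemeasurable (hdens.and hpos)
  refine ae_imp_of_ae_restrict (hae.mono ?_)
  rintro x ⟨hx1, hx2⟩
  have hx3 := hx1.comp tendsto_two_pow_inv
  have hzero : Tendsto (fun k : ℕ => ENNReal.ofReal (Real.exp (-(k * Real.log 2) * (c - a))))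
      atTop (𝓝 0) := by
    have hL : 0 < Real.log 2 * (c - a) := mul_pos (Real.log_pos one_lt_two) (sub_pos.2 hac)
    have e1 : Tendsto (fun k : ℕ => -((k : ℝ) * (Real.log 2 * (c - a)))) atTop atBot :=
      tendsto_neg_atTop_atBot.comp (tendsto_natCast_atTop_atTop.atTop_mul_const hL)
    have e2 := ENNReal.tendsto_ofReal (Real.tendsto_exp_atBot.comp e1)
    rw [ENNReal.ofReal_zero] at e2
    refine e2.congr fun k => ?_
    simp only [Function.comp_apply]
    congr 2
    ring
  -- positive limit density gives `μA B ≥ 2^(-(c - a) k) μ B`, while `μA B ≤ 2^(-c k)`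
  filter_upwards [hzero.eventually_lt hx3 hx2, hfrost] with k hk1 hk2
  simp only [Function.comp_apply] at hk1
  have h1 := ENNReal.mul_lt_of_lt_div hk1
  have h2 := h1.le.trans (hk2 (proj x))
  have h3 : ENNReal.ofReal (Real.exp (-(k * Real.log 2) * c)) =
      ENNReal.ofReal (Real.exp (-(k * Real.log 2) * (c - a))) *
        ENNReal.ofReal (Real.exp (-(k * Real.log 2) * a)) := by
    rw [← ENNReal.ofReal_mul (Real.exp_pos _).le, ← Real.exp_add]
    congr 2
    ring
  rw [h3] at h2
  exact (ENNReal.mul_le_mul_iff_right (by simpa using Real.exp_pos _) ENNReal.ofReal_ne_top).1 h2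

/-- If the stopped cylinder sets have `ν`-measure `2^(-(D + o(1)) k)` almost surely, then so have
the balls of radius `2⁻ᵏ`. -/
lemma ae_tendsto_dyadic (hK : IsAttractor S K)
    {C ρ : ℝ} (hC : 0 < C) (hρ0 : 0 < ρ) (hρ1 : ρ < 1) (hd : 0 < diam K)
    (hb : ∀ w : List (Fin m), diam (S.wmap w '' K) ≤ C * ρ ^ w.length)
    (hAWSC : AWSC S K) (hNEO : NoExactOverlaps S) {p : Fin m → ℝ} (hp : ∀ i, 0 < p i)
    {ν : Measure (ℕ → Fin m)} [IsProbabilityMeasure ν]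
    (hcyl : ∀ w : List (Fin m), ν (cylinder w) = ENNReal.ofReal ((w.map p).prod))
    {proj : (ℕ → Fin m) → Euc d} (hproj : Measurable proj)
    (hpm : ∀ x n, proj x ∈ S.wmap (wpre x n) '' K) {D : ℝ}
    (hD : ∀ᵐ x ∂ν, Tendsto (fun k : ℕ =>
      Real.log (((wpre x (stopTime S K k x)).map p).prod) / -(k * Real.log 2)) atTop (𝓝 D)) :
    ∀ᵐ x ∂ν, Tendsto (fun k : ℕ =>
      Real.log (ν.map proj (closedBall (proj x) (((2 : ℝ) ^ k)⁻¹))).toReal /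
        -(k * Real.log 2)) atTop (𝓝 D) := by
  have hL : 0 < Real.log 2 := Real.log_pos one_lt_two
  have hμp : IsProbabilityMeasure (ν.map proj) :=
    Measure.isProbabilityMeasure_map hproj.aemeasurable
  have hball : ∀ x k, ((wpre x (stopTime S K k x)).map p).prod ≤
      (ν.map proj (closedBall (proj x) (((2 : ℝ) ^ k)⁻¹))).toReal := fun x k =>
    (ENNReal.ofReal_le_iff_le_toReal (measure_ne_top _ _)).1
      (le_measure_closedBall hK hρ0 hρ1 hb hcyl hproj hpm x k)
  have hlow : ∀ a < D, ∀ᵐ x ∂ν, ∀ᶠ k : ℕ in atTop,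
      a ≤ Real.log (ν.map proj (closedBall (proj x) (((2 : ℝ) ^ k)⁻¹))).toReal /
        -(k * Real.log 2) := by
    intro a ha
    obtain ⟨b, hab, hbD⟩ := exists_between ha
    have key : ∀ N : ℕ, _ := fun N => ae_lower_of_le hC hρ0 hρ1 hd hb hAWSC hNEO hcyl hproj hpm
      hab (N := N) (A := {x | ∀ k ≥ N, ((wpre x (stopTime S K k x)).map p).prod ≤
        Real.exp (-(k * Real.log 2) * b)}) (fun x hx => hx)
    filter_upwards [hD, ae_all_iff.2 key] with x hx hkey
    obtain ⟨N, hN⟩ := eventually_atTop.1 (hx.eventually (lt_mem_nhds hbD))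
    have hmem : ∀ k ≥ N + 1, ((wpre x (stopTime S K k x)).map p).prod ≤
        Real.exp (-(k * Real.log 2) * b) := by
      intro k hk
      have h1 := hN k (by omega)
      have hk0 : (0 : ℝ) < k := by exact_mod_cast (by omega : 0 < k)
      rw [lt_div_iff_of_neg (neg_lt_zero.2 (mul_pos hk0 hL))] at h1
      refine (Real.log_le_iff_le_exp (prod_map_pos hp _)).1 ?_
      linarith
    filter_upwards [hkey (N + 1) hmem, eventually_gt_atTop 0] with k hk hk0
    have hk0' : (0 : ℝ) < k := by exact_mod_cast hk0
    have hpos := (prod_map_pos hp _).trans_le (hball x k)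
    rw [le_div_iff_of_neg (neg_lt_zero.2 (mul_pos hk0' hL)), mul_comm]
    exact (Real.log_le_iff_le_exp hpos).2 (ENNReal.toReal_le_of_le_ofReal (Real.exp_pos _).le hk)
  have hlow' : ∀ᵐ x ∂ν, ∀ j : ℕ, ∀ᶠ k : ℕ in atTop, D - 1 / ((j : ℝ) + 1) ≤
      Real.log (ν.map proj (closedBall (proj x) (((2 : ℝ) ^ k)⁻¹))).toReal /
        -(k * Real.log 2) :=
    ae_all_iff.2 fun j => hlow _ (sub_lt_self _ (by positivity))
  filter_upwards [hD, hlow'] with x hx hxl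
  refine tendsto_order.2 ⟨fun a ha => ?_, fun b hb' => ?_⟩
  · obtain ⟨j, hj⟩ := exists_nat_one_div_lt (sub_pos.2 ha)
    filter_upwards [hxl j] with k hk
    linarith
  · filter_upwards [hx.eventually (gt_mem_nhds hb')] with k hk
    refine lt_of_le_of_lt ?_ hk
    refine div_le_div_of_nonpos_of_le (by simp; positivity) ?_
    exact Real.log_le_log (prod_map_pos hp _) (hball x k)

/-- Dyadic radii suffice for computing local dimensions. -/
lemma tendsto_of_dyadic {F : ℝ → ℝ} {D : ℝ} (hpos : ∀ k : ℕ, 0 < F (((2 : ℝ) ^ k)⁻¹))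
    (hmono : Monotone F) (hle : ∀ r, F r ≤ 1)
    (h : Tendsto (fun k : ℕ => Real.log (F (((2 : ℝ) ^ k)⁻¹)) / -(k * Real.log 2)) atTop
      (𝓝 D)) :
    Tendsto (fun r : ℝ => Real.log (F r) / Real.log r) (𝓝[>] 0) (𝓝 D) := by
  have hL : 0 < Real.log 2 := Real.log_pos one_lt_two
  set κ : ℝ → ℕ := fun r => ⌊-Real.log r / Real.log 2⌋₊ with hκ
  have hκlim : Tendsto κ (𝓝[>] 0) atTop :=
    tendsto_nat_floor_atTop.comp
      ((tendsto_neg_atBot_atTop.comp Real.tendsto_log_nhdsGT_zero).atTop_div_const hL)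
  have hratio : Tendsto (fun k : ℕ => (k : ℝ) / (k + 1)) atTop (𝓝 1) :=
    tendsto_natCast_div_add_atTop 1
  have hlow : Tendsto (fun r => Real.log (F (((2 : ℝ) ^ κ r)⁻¹)) / -(κ r * Real.log 2) *
      ((κ r : ℝ) / (κ r + 1))) (𝓝[>] 0) (𝓝 D) := by
    have e := h.mul hratio
    rw [mul_one] at e
    exact e.comp hκlim
  have hup : Tendsto (fun r => Real.log (F (((2 : ℝ) ^ (κ r + 1))⁻¹)) /
      -((κ r + 1 : ℕ) * Real.log 2) * ((κ r : ℝ) / (κ r + 1))⁻¹) (𝓝[>] 0) (𝓝 D) := by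
    have e := (h.comp (tendsto_add_atTop_nat 1)).mul (hratio.inv₀ one_ne_zero)
    rw [inv_one, mul_one] at e
    exact e.comp hκlim
  have hev : ∀ᶠ r : ℝ in 𝓝[>] 0, 1 ≤ κ r ∧ 0 < r ∧ ((2 : ℝ) ^ (κ r + 1))⁻¹ ≤ r ∧
      r ≤ ((2 : ℝ) ^ κ r)⁻¹ ∧ κ r * Real.log 2 ≤ -Real.log r ∧
      -Real.log r ≤ (κ r + 1) * Real.log 2 := by
    filter_upwards [hκlim.eventually_ge_atTop 1, self_mem_nhdsWithin] with r hr hr0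
    have hr0' : (0 : ℝ) < r := hr0
    have h1 : κ r * Real.log 2 ≤ -Real.log r := by
      have := Nat.floor_le (a := -Real.log r / Real.log 2) (by
        by_contra hneg
        have : κ r = 0 := Nat.floor_of_nonpos (not_le.1 hneg).le
        omega)
      exact (le_div_iff₀ hL).1 this
    have h2 : -Real.log r ≤ (κ r + 1) * Real.log 2 :=
      (div_le_iff₀ hL).1 (Nat.lt_floor_add_one (-Real.log r / Real.log 2)).le
    refine ⟨hr, hr0, ?_, ?_, h1, h2⟩
    · refine (Real.log_le_log_iff (by positivity) hr0').1 ?_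
      rw [Real.log_inv, Real.log_pow]
      push_cast
      linarith
    · refine (Real.log_le_log_iff hr0' (by positivity)).1 ?_
      rw [Real.log_inv, Real.log_pow]
      linarith
  refine tendsto_of_tendsto_of_tendsto_of_le_of_le' hlow hup ?_ ?_
  · filter_upwards [hev] with r hr
    obtain ⟨h1, h2, h3, h4, h5, h6⟩ := hr
    have hk : (1 : ℝ) ≤ κ r := by exact_mod_cast h1
    have hk0 : (0 : ℝ) < κ r := by linarith
    have hFr : 0 < F r := (hpos _).trans_le (hmono h3)
    have e1 : Real.log (F (((2 : ℝ) ^ κ r)⁻¹)) / -(κ r * Real.log 2) * ((κ r : ℝ) / (κ r + 1)) =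
        -Real.log (F (((2 : ℝ) ^ κ r)⁻¹)) / ((κ r + 1) * Real.log 2) := by
      field_simp
    have e2 : Real.log (F r) / Real.log r = -Real.log (F r) / -Real.log r := by
      rw [neg_div_neg_eq]
    rw [e1, e2]
    have l1 : Real.log (F r) ≤ Real.log (F (((2 : ℝ) ^ κ r)⁻¹)) := Real.log_le_log hFr (hmono h4)
    have l2 : Real.log (F r) ≤ 0 := Real.log_nonpos hFr.le (hle _)
    have l3 : 0 < κ r * Real.log 2 := mul_pos hk0 hL
    exact div_le_div₀ (by linarith) (by linarith) (by linarith) h6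
  · filter_upwards [hev] with r hr
    obtain ⟨h1, h2, h3, h4, h5, h6⟩ := hr
    have hk : (1 : ℝ) ≤ κ r := by exact_mod_cast h1
    have hk0 : (0 : ℝ) < κ r := by linarith
    have hFr : 0 < F r := (hpos _).trans_le (hmono h3)
    have e1 : Real.log (F (((2 : ℝ) ^ (κ r + 1))⁻¹)) / -((κ r + 1 : ℕ) * Real.log 2) *
        ((κ r : ℝ) / (κ r + 1))⁻¹ =
        -Real.log (F (((2 : ℝ) ^ (κ r + 1))⁻¹)) / (κ r * Real.log 2) := by
      push_cast
      field_simp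
    have e2 : Real.log (F r) / Real.log r = -Real.log (F r) / -Real.log r := by
      rw [neg_div_neg_eq]
    rw [e1, e2]
    have l1 := Real.log_le_log (hpos _) (hmono h3)
    have l2 : Real.log (F (((2 : ℝ) ^ (κ r + 1))⁻¹)) ≤ 0 := Real.log_nonpos (hpos _).le (hle _)
    have l3 : 0 < κ r * Real.log 2 := mul_pos hk0 hL
    exact div_le_div₀ (by linarith) (by linarith) l3 h5

/-- The set of points with a given dyadic local dimension is measurable, so that an almost sure
statement on the sequence space passes to the projected measure. -/
lemma exactDim_of_ae_dyadic {ν : Measure (ℕ → Fin m)} [IsProbabilityMeasure ν]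
    {proj : (ℕ → Fin m) → Euc d} (hproj : Measurable proj) {D : ℝ}
    (hpos : ∀ x, ∀ k : ℕ, 0 < ν.map proj (closedBall (proj x) (((2 : ℝ) ^ k)⁻¹)))
    (h : ∀ᵐ x ∂ν, Tendsto (fun k : ℕ =>
      Real.log (ν.map proj (closedBall (proj x) (((2 : ℝ) ^ k)⁻¹))).toReal /
        -(k * Real.log 2)) atTop (𝓝 D)) :
    ExactDim (ν.map proj) D := by
  have hμp : IsProbabilityMeasure (ν.map proj) :=
    Measure.isProbabilityMeasure_map hproj.aemeasurable
  have hmeas : ∀ r : ℝ, Measurable fun y : Euc d => ν.map proj (closedBall y r) := by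
    intro r
    have hs : MeasurableSet {q : Euc d × Euc d | dist q.2 q.1 ≤ r} :=
      (isClosed_le (continuous_snd.dist continuous_fst) continuous_const).measurableSet
    exact measurable_measure_prodMk_left hs
  have hset1 : MeasurableSet {y : Euc d | ∀ k : ℕ,
      0 < ν.map proj (closedBall y (((2 : ℝ) ^ k)⁻¹))} := by
    have : {y : Euc d | ∀ k : ℕ, 0 < ν.map proj (closedBall y (((2 : ℝ) ^ k)⁻¹))} =
        ⋂ k : ℕ, {y | 0 < ν.map proj (closedBall y (((2 : ℝ) ^ k)⁻¹))} := by
      ext; simp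
    rw [this]
    exact MeasurableSet.iInter fun k => measurableSet_lt measurable_const (hmeas _)
  have hset2 : MeasurableSet {y : Euc d | Tendsto (fun k : ℕ =>
      Real.log (ν.map proj (closedBall y (((2 : ℝ) ^ k)⁻¹))).toReal / -(k * Real.log 2))
      atTop (𝓝 D)} :=
    measurableSet_tendsto (𝓝 D) fun k =>
      (Real.measurable_log.comp (hmeas _).ennreal_toReal).div_const _
  have h1 : ∀ᵐ y ∂ν.map proj, ∀ k : ℕ, 0 < ν.map proj (closedBall y (((2 : ℝ) ^ k)⁻¹)) :=
    (ae_map_iff hproj.aemeasurable hset1).2 (Eventually.of_forall hpos)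
  have h2 := (ae_map_iff hproj.aemeasurable hset2).2 h
  filter_upwards [h1, h2] with y hy1 hy2
  refine tendsto_of_dyadic (F := fun r => (ν.map proj (closedBall y r)).toReal)
    (fun k => ENNReal.toReal_pos (hy1 k).ne' (measure_ne_top _ _)) ?_ ?_ hy2
  · exact fun r s hrs => ENNReal.toReal_mono (measure_ne_top _ _)
      (measure_mono (closedBall_subset_closedBall hrs))
  · exact fun r => ENNReal.toReal_le_of_le_ofReal zero_le_one (by simpa using prob_le_one)

end Local

/-! ### The Lyapunov exponent and the dimension formula -/

section Lyapunov

variable {d m : ℕ} {S : C1IFS d m} {K : Set (Euc d)}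

lemma lyapunov_measurable {lam : (ℕ → Fin m) → ℝ}
    (hlam : ∀ x, Tendsto
      (fun n : ℕ => -(Real.log (diam (S.wmap (wpre x n) '' K)) / n)) atTop (𝓝 (lam x))) :
    Measurable lam := by
  refine measurable_of_tendsto_metrizable (f := fun (n : ℕ) x =>
    -(Real.log (diam (S.wmap (wpre x n) '' K)) / n)) (fun n => ?_) (tendsto_pi_nhds.2 hlam)
  exact wpre_measurable (fun w => -(Real.log (diam (S.wmap w '' K)) / n)) n

/-- Since one more map does not increase the diameter of small cylinder sets, the Lyapunov
exponent does not increase along the shift. -/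
lemma lyapunov_shift_le (hK : IsAttractor S K) (hd : 0 < diam K) {n₀ : ℕ}
    (hc : ∀ i, ∀ w : List (Fin m), n₀ ≤ w.length →
        diam (S.wmap (i :: w) '' K) ≤ diam (S.wmap w '' K)) {lam : (ℕ → Fin m) → ℝ}
    (hlam : ∀ x, Tendsto
      (fun n : ℕ => -(Real.log (diam (S.wmap (wpre x n) '' K)) / n)) atTop (𝓝 (lam x)))
    (x : ℕ → Fin m) : lam (shiftSeq x 1) ≤ lam x := by
  have h1 : Tendsto (fun n : ℕ => -(Real.log (diam (S.wmap (wpre (shiftSeq x 1) n) '' K)) / n) *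
      ((n : ℝ) / (n + 1))) atTop (𝓝 (lam (shiftSeq x 1))) := by
    simpa using (hlam (shiftSeq x 1)).mul (tendsto_natCast_div_add_atTop (1 : ℝ))
  have h2 := (hlam x).comp (tendsto_add_atTop_nat 1)
  refine le_of_tendsto_of_tendsto h1 h2 ?_
  filter_upwards [eventually_ge_atTop n₀, eventually_gt_atTop 0] with n hn hn0
  have hn0' : (0 : ℝ) < n := by exact_mod_cast hn0
  have h3 := Real.log_le_log (diam_wmap_pos hK hd _)
    (hc (x 0) (wpre (shiftSeq x 1) n) (by rwa [wpre_length]))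
  rw [← wpre_one_add] at h3
  simp only [Function.comp_apply]
  have h4 : -(Real.log (diam (S.wmap (wpre (shiftSeq x 1) n) '' K)) / n) * ((n : ℝ) / (n + 1)) =
      -(Real.log (diam (S.wmap (wpre (shiftSeq x 1) n) '' K)) / ((n + 1 : ℕ) : ℝ)) := by
    push_cast
    field_simp
  rw [h4]
  gcongr

lemma lyapunov_pos (hK : IsAttractor S K) (hd : 0 < diam K) {C ρ : ℝ} (hC : 0 < C)
    (hρ0 : 0 < ρ) (hρ1 : ρ < 1)
    (hb : ∀ w : List (Fin m), diam (S.wmap w '' K) ≤ C * ρ ^ w.length)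
    {lam : (ℕ → Fin m) → ℝ}
    (hlam : ∀ x, Tendsto
      (fun n : ℕ => -(Real.log (diam (S.wmap (wpre x n) '' K)) / n)) atTop (𝓝 (lam x)))
    (x : ℕ → Fin m) : 0 < lam x := by
  refine (neg_pos.2 (Real.log_neg hρ0 hρ1)).trans_le ?_
  have h1 : Tendsto (fun n : ℕ => -(Real.log C / n) + -Real.log ρ) atTop (𝓝 (-Real.log ρ)) := by
    simpa using ((tendsto_const_div_atTop_nhds_zero_nat (Real.log C)).neg).add_const (-Real.log ρ)
  refine le_of_tendsto_of_tendsto h1 (hlam x) ?_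
  filter_upwards [eventually_gt_atTop 0] with n hn0
  have hn0' : (0 : ℝ) < n := by exact_mod_cast hn0
  have h2 := Real.log_le_log (diam_wmap_pos hK hd _) (hb (wpre x n))
  rw [wpre_length, Real.log_mul hC.ne' (pow_pos hρ0 n).ne', Real.log_pow] at h2
  have h3 : Real.log (diam (S.wmap (wpre x n) '' K)) / n ≤ Real.log C / n + Real.log ρ := by
    rw [div_le_iff₀ hn0']
    have : (Real.log C / n + Real.log ρ) * n = Real.log C + n * Real.log ρ := by field_simp
    linarith
  linarith

/-- If `K` is a single point, then `μ` is a point mass; its dimension `0` agrees with the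
formula, in which the exponent and hence the quotient are `0`. -/
lemma exactDim_of_diam_eq_zero (hK : IsAttractor S K) (hd : diam K = 0)
    {ν : Measure (ℕ → Fin m)} [IsProbabilityMeasure ν]
    {proj : (ℕ → Fin m) → Euc d} (hproj : Measurable proj) (hpK : ∀ x, proj x ∈ K)
    {lam : (ℕ → Fin m) → ℝ}
    (hlam : ∀ x, Tendsto
      (fun n : ℕ => -(Real.log (diam (S.wmap (wpre x n) '' K)) / n)) atTop (𝓝 (lam x)))
    (h : ℝ) : ExactDim (ν.map proj) (h / ∫ x, lam x ∂ν) := by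
  have hμp : IsProbabilityMeasure (ν.map proj) :=
    Measure.isProbabilityMeasure_map hproj.aemeasurable
  have hsub : ∀ y ∈ K, ∀ z ∈ K, y = z := fun y hy z hz =>
    dist_le_zero.1 (hd ▸ dist_le_diam_of_mem hK.1.isBounded hy hz)
  have hlam0 : ∀ x, lam x = 0 := by
    intro x
    refine tendsto_nhds_unique (hlam x) (tendsto_const_nhds.congr fun n => ?_)
    have : diam (S.wmap (wpre x n) '' K) = 0 := by
      refine diam_subsingleton ?_
      rintro _ ⟨y, hy, rfl⟩ _ ⟨z, hz, rfl⟩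
      rw [hsub y hy z hz]
    simp [this]
  simp only [hlam0, integral_zero]
  have hmem : ∀ᵐ y ∂ν.map proj, y ∈ K :=
    (ae_map_iff hproj.aemeasurable hK.1.isClosed.measurableSet).2 (Eventually.of_forall hpK)
  filter_upwards [hmem] with y hy
  refine tendsto_const_nhds.congr' ?_
  filter_upwards [self_mem_nhdsWithin] with r hr
  have hr' : (0 : ℝ) < r := hr
  have : ν.map proj (closedBall y r) = 1 := by
    rw [Measure.map_apply hproj measurableSet_closedBall]
    have hu : proj ⁻¹' closedBall y r = univ := eq_univ_of_forall fun x => by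
      rw [mem_preimage, hsub _ (hpK x) y hy]
      exact mem_closedBall_self hr'.le
    rw [hu, measure_univ]
  simp [this]

end Lyapunov

/-- Under the AWSC with no exact overlaps, every weakly conformal measure
`μ = ν ∘ π⁻¹` (with `ν` the Bernoulli measure for a positive probability vector
`(p₁, …, p_m)`) is exact dimensional with
`dim(μ) = (-Σ_i p_i log p_i) / λ_ν`, where `λ_ν = ∫ λ dν` is the Lyapunov exponent. -/
theorem statement11 {d m : ℕ} (hd : 1 ≤ d) (hm : 2 ≤ m)
    (S : C1IFS d m) (K : Set (Euc d)) (hK : IsAttractor S K)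
    (proj : (ℕ → Fin m) → Euc d) (hwc : WeaklyConformalWith S K proj)
    (hproj : Measurable proj)
    (hAWSC : AWSC S K) (hNEO : NoExactOverlaps S)
    (p : Fin m → ℝ) (hp : ∀ i, 0 < p i) (hps : ∑ i, p i = 1)
    (ν : Measure (ℕ → Fin m)) (hν : IsProbabilityMeasure ν)
    (hcyl : ∀ w : List (Fin m), ν (cylinder w) = ENNReal.ofReal ((w.map p).prod))
    (lam : (ℕ → Fin m) → ℝ)
    (hlam : ∀ x, Tendsto
      (fun n : ℕ => -(Real.log (diam (S.wmap (wpre x n) '' K)) / n)) atTop (𝓝 (lam x))) :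
    ExactDim (ν.map proj) ((-∑ i, p i * Real.log (p i)) / ∫ x, lam x ∂ν) := by
  obtain ⟨hpK, hlim, -⟩ := hwc
  rcases (diam_nonneg (s := K)).eq_or_lt with hd0 | hd0
  -- a one-point attractor: both sides are `0`, the right one because division by `0` gives `0`
  · exact exactDim_of_diam_eq_zero hK hd0.symm hproj hpK hlam _
  obtain ⟨C, hC, ρ, hρ0, hρ1, n₀, hb, hc⟩ := exists_diam_bound hm hK proj hlim
  have hpm := proj_mem hK hlim
  obtain ⟨l, hl⟩ := ae_eq_const_of_shift_le hps hp hcyl (lyapunov_measurable hlam)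
    (lyapunov_shift_le hK hd0 hc hlam)
  have hint : ∫ x, lam x ∂ν = l := by
    rw [integral_congr_ae hl]
    simp
  rw [hint]
  refine exactDim_of_ae_dyadic hproj (fun x k => ?_)
    (ae_tendsto_dyadic hK hC hρ0 hρ1 hd0 hb hAWSC hNEO hp hcyl hproj hpm ?_)
  · exact (ENNReal.ofReal_pos.2 (prod_map_pos hp _)).trans_le
      (le_measure_closedBall hK hρ0 hρ1 hb hcyl hproj hpm x k)
  · filter_upwards [hl, ae_tendsto_log_cylinder hps hp hcyl] with x hx1 hx2
    refine tendsto_along_stop (P := fun n => Real.log (((wpre x n).map p).prod))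
      (n := fun k => stopTime S K k x)
      (fun j => diam_wmap_pos hK hd0 _) ?_ (hx1 ▸ hlam x) (by rwa [neg_neg])
      (fun k => diam_stopTime_le hρ0 hρ1 hb k x) (fun k j hj => lt_diam_of_lt_stopTime k x hj)
    exact hx1 ▸ lyapunov_pos hK hd0 hC hρ0 hρ1 hb hlam x
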